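/- Suppose G is connected, p > r + 2, C_p = 2(p + r − 2)/(p − r − 2), and ‖Δ‖ < λ₂/(√5 · C_p · √(rn)). Then every second-order critical point Y of the rank-p problem satisfies: (i) rank(Y) = r, so Y = Ẑ U for some Ẑ ∈ ℝ^{rn×r} whose r×r blocks are orthogonal matrices and some U ∈ ℝ^{r×p} with U Uᵀ = I_r; (ii) Y Yᵀ is the unique optimal solution of the SDP relaxation (in particular any two second-order critical points Y, Y′ satisfy Y Yᵀ = Y′Y′ᵀ, i.e., Y is the unique solution of the rank-p problem up to right-multiplication by an orthogonal matrix); (iii) Ẑ minimizes ⟨L̂, W Wᵀ⟩ over all W ∈ ℝ^{rn×r} with orthogonal r×r blocks, uniquely up to right-multiplication by an element of O(r). -/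

import Mathlib

open Matrix MeasureTheory ProbabilityTheory
open scoped Kronecker BigOperators

namespace SyncPaper

variable {α : Type*}

/-- The `i`-th `r × p` row-block of a block matrix `Y ∈ α^{rn × p}`. -/
def blk {n r p : ℕ} (Y : Matrix (Fin n × Fin r) (Fin p) α) (i : Fin n) :
    Matrix (Fin r) (Fin p) α :=
  Matrix.of fun a b => Y (i, a) b

/-- `Y` is feasible: every `r × p` row-block has orthonormal rows. -/
def Feasible {n r p : ℕ} (Y : Matrix (Fin n × Fin r) (Fin p) ℝ) : Prop :=
  ∀ i, blk Y i * (blk Y i)ᵀ = 1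

/-- Symmetric block-diagonal projection: keeps the symmetric part of each `r × r`
diagonal block and zeroes out all off-diagonal blocks. -/
noncomputable def SBD {n r : ℕ} (M : Matrix (Fin n × Fin r) (Fin n × Fin r) ℝ) :
    Matrix (Fin n × Fin r) (Fin n × Fin r) ℝ :=
  Matrix.of fun q q' => if q.1 = q'.1 then (M q q' + M q' q) / 2 else 0

/-- The matrix `S(Y) = L̂ − SBD(L̂ Y Yᵀ)`. -/
noncomputable def Smat {n r p : ℕ} (Lhat : Matrix (Fin n × Fin r) (Fin n × Fin r) ℝ)
    (Y : Matrix (Fin n × Fin r) (Fin p) ℝ) :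
    Matrix (Fin n × Fin r) (Fin n × Fin r) ℝ :=
  Lhat - SBD (Lhat * Y * Yᵀ)

/-- Second-order critical point of the rank-`p` problem `min ⟨L̂, Y Yᵀ⟩` over feasible `Y`. -/
def IsSecondOrderCritical {n r p : ℕ} (Lhat : Matrix (Fin n × Fin r) (Fin n × Fin r) ℝ)
    (Y : Matrix (Fin n × Fin r) (Fin p) ℝ) : Prop :=
  Feasible Y ∧ Smat Lhat Y * Y = 0 ∧
    ∀ Ydot : Matrix (Fin n × Fin r) (Fin p) ℝ,
      (∀ i, blk Ydot i * (blk Y i)ᵀ + blk Y i * (blk Ydot i)ᵀ = 0) →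
      0 ≤ (Smat Lhat Y * Ydot * Ydotᵀ).trace

/-- The stacked ground truth `Z ∈ ℝ^{rn × r}`. -/
def Zstack {n r : ℕ} (Zb : Fin n → Matrix (Fin r) (Fin r) ℝ) :
    Matrix (Fin n × Fin r) (Fin r) ℝ :=
  Matrix.of fun q b => Zb q.1 q.2 b

/-- The block-diagonal matrix `D` with diagonal blocks `Z_1, …, Z_n`. -/
def Dmat {n r : ℕ} (Zb : Fin n → Matrix (Fin r) (Fin r) ℝ) :
    Matrix (Fin n × Fin r) (Fin n × Fin r) ℝ :=
  Matrix.of fun q q' => if q.1 = q'.1 then Zb q.1 q.2 q'.2 else 0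

/-- `L_Z = D (L ⊗ I_r) Dᵀ`. -/
def LZmat {n r : ℕ} (L : Matrix (Fin n) (Fin n) ℝ) (Zb : Fin n → Matrix (Fin r) (Fin r) ℝ) :
    Matrix (Fin n × Fin r) (Fin n × Fin r) ℝ :=
  Dmat Zb * (L ⊗ₖ (1 : Matrix (Fin r) (Fin r) ℝ)) * (Dmat Zb)ᵀ

/-- The ℓ₂→ℓ₂ operator norm of a matrix. -/
noncomputable def opNorm {m m' : Type*} [Fintype m] [Fintype m'] [DecidableEq m']
    (M : Matrix m m' ℝ) : ℝ :=
  ‖(Matrix.toEuclideanLin (𝕜 := ℝ) (m := m) (n := m')).trans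
      LinearMap.toContinuousLinearMap M‖

/-- The second-smallest eigenvalue of a connected graph Laplacian, via the variational
(Courant–Fischer) characterization: the minimum of the quadratic form over unit vectors
orthogonal to the all-ones vector. -/
noncomputable def lam2 {n : ℕ} (L : Matrix (Fin n) (Fin n) ℝ) : ℝ :=
  sInf {t : ℝ | ∃ x : Fin n → ℝ, (∑ i, x i = 0) ∧ (∑ i, (x i) ^ 2 = 1) ∧ t = x ⬝ᵥ (L *ᵥ x)}

/-- Squared Frobenius norm of a real matrix. -/
def frobSq {m m' : Type*} [Fintype m] [Fintype m'] (M : Matrix m m' ℝ) : ℝ :=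
  ∑ i, ∑ j, (M i j) ^ 2

/-- The inner product `⟨A, B⟩ = tr(A Bᵀ)`. -/
def ip {m : Type*} [Fintype m] (A B : Matrix m m ℝ) : ℝ := (A * Bᵀ).trace

/-- Feasibility for the SDP relaxation. -/
def SDPFeasible {n r : ℕ} (X : Matrix (Fin n × Fin r) (Fin n × Fin r) ℝ) : Prop :=
  X.PosSemidef ∧ SBD X = 1

end SyncPaper

namespace SyncPaper

/-- The bilinear form `tr(Pᵀ Δ Q)` written out. -/
def BF {m κ : Type*} [Fintype m] [Fintype κ] (Δ : Matrix m m ℝ) (P Q : m → κ → ℝ) : ℝ :=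
  ∑ q, ∑ q', Δ q q' * ∑ b, P q b * Q q' b

/-- squared norm -/
def NS {m κ : Type*} [Fintype m] [Fintype κ] (P : m → κ → ℝ) : ℝ := ∑ q, ∑ b, P q b ^ 2

lemma NS_nonneg {m κ : Type*} [Fintype m] [Fintype κ] (P : m → κ → ℝ) : 0 ≤ NS P :=
  Finset.sum_nonneg fun _ _ => Finset.sum_nonneg fun _ _ => sq_nonneg _

lemma BF_bound {m κ : Type*} [Fintype m] [Fintype κ] (Δ : Matrix m m ℝ) (δ : ℝ) (hδ : 0 ≤ δ)
    (hΔ : ∀ u v : m → ℝ, |u ⬝ᵥ (Δ *ᵥ v)| ≤ δ * (√(∑ q, u q ^ 2) * √(∑ q, v q ^ 2)))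
    (P Q : m → κ → ℝ) : |BF Δ P Q| ≤ δ * (√(NS P) * √(NS Q)) := by
  have h1 : BF Δ P Q = ∑ b, (fun q => P q b) ⬝ᵥ (Δ *ᵥ (fun q => Q q b)) := by
    simp only [BF, dotProduct, mulVec, Finset.mul_sum]
    conv_lhs => enter [2, q]; rw [Finset.sum_comm]
    rw [Finset.sum_comm]
    refine Finset.sum_congr rfl fun b _ => Finset.sum_congr rfl fun q _ =>
      Finset.sum_congr rfl fun q' _ => by ring
  rw [h1]
  calc _ ≤ ∑ b, |(fun q => P q b) ⬝ᵥ (Δ *ᵥ (fun q => Q q b))| := Finset.abs_sum_le_sum_abs _ _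
    _ ≤ ∑ b, δ * (√(∑ q, P q b ^ 2) * √(∑ q, Q q b ^ 2)) := Finset.sum_le_sum fun b _ => hΔ _ _
    _ = δ * ∑ b, (√(∑ q, P q b ^ 2) * √(∑ q, Q q b ^ 2)) := by rw [Finset.mul_sum]
    _ ≤ δ * (√(∑ b, ∑ q, P q b ^ 2) * √(∑ b, ∑ q, Q q b ^ 2)) := by
        refine mul_le_mul_of_nonneg_left ?_ hδ
        exact Real.sum_sqrt_mul_sqrt_le _ (fun b => Finset.sum_nonneg fun _ _ => sq_nonneg _)
          (fun b => Finset.sum_nonneg fun _ _ => sq_nonneg _)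
    _ = _ := by
        unfold NS
        rw [Finset.sum_comm, Finset.sum_comm (f := fun b q => Q q b ^ 2)]

lemma lap_sum {n : ℕ} (G : SimpleGraph (Fin n)) [DecidableRel G.Adj] (h : Fin n → Fin n → ℝ)
    (i : Fin n) :
    ∑ j, G.lapMatrix ℝ i j * h i j = ∑ j, (G.adjMatrix ℝ i j) * (h i i - h i j) := by
  simp only [SimpleGraph.lapMatrix, Matrix.sub_apply, sub_mul, Finset.sum_sub_distrib, mul_sub]
  congr 1
  rw [← Finset.sum_mul]
  simp [SimpleGraph.degMatrix, diagonal_apply, ite_mul, SimpleGraph.adjMatrix_apply,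
    ← SimpleGraph.card_neighborFinset_eq_degree, SimpleGraph.neighborFinset_eq_filter]

lemma lap_quad {n : ℕ} (G : SimpleGraph (Fin n)) [DecidableRel G.Adj] (x : Fin n → ℝ) :
    x ⬝ᵥ (G.lapMatrix ℝ *ᵥ x) = (∑ i, ∑ j, G.adjMatrix ℝ i j * (x i - x j) ^ 2) / 2 := by
  have := SimpleGraph.lapMatrix_toLinearMap₂' ℝ G x
  rw [Matrix.toLinearMap₂'_apply'] at this
  rw [this]
  congr 1
  refine Finset.sum_congr rfl fun i _ => Finset.sum_congr rfl fun j _ => ?_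
  simp [SimpleGraph.adjMatrix_apply]

lemma lam2_le {n : ℕ} (G : SimpleGraph (Fin n)) [DecidableRel G.Adj] (x : Fin n → ℝ)
    (hx : ∑ i, x i = 0) :
    lam2 (G.lapMatrix ℝ) * ∑ i, x i ^ 2 ≤ x ⬝ᵥ (G.lapMatrix ℝ *ᵥ x) := by
  have hnn : ∀ y : Fin n → ℝ, 0 ≤ y ⬝ᵥ (G.lapMatrix ℝ *ᵥ y) := by
    intro y
    rw [lap_quad]
    refine div_nonneg (Finset.sum_nonneg fun i _ => Finset.sum_nonneg fun j _ =>
      mul_nonneg ?_ (sq_nonneg _)) (by norm_num)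
    rw [SimpleGraph.adjMatrix_apply]; split_ifs <;> norm_num
  have h0 : 0 ≤ ∑ i, x i ^ 2 := Finset.sum_nonneg fun _ _ => sq_nonneg _
  rcases h0.eq_or_lt with h | h
  · rw [← h, mul_zero]; exact hnn x
  · set N := ∑ i, x i ^ 2 with hN
    have hs : (√N)⁻¹ ^ 2 = N⁻¹ := by rw [inv_pow, Real.sq_sqrt h0]
    have hle : lam2 (G.lapMatrix ℝ) ≤
        ((√N)⁻¹ • x) ⬝ᵥ (G.lapMatrix ℝ *ᵥ ((√N)⁻¹ • x)) := by
      refine csInf_le ⟨0, ?_⟩ ⟨_, ?_, ?_, rfl⟩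
      · rintro t ⟨y, -, -, rfl⟩; exact hnn y
      · simp [← Finset.mul_sum, hx]
      · simp only [Pi.smul_apply, smul_eq_mul, mul_pow, ← Finset.mul_sum, hs, ← hN]
        exact inv_mul_cancel₀ h.ne'
    rw [mulVec_smul, smul_dotProduct, dotProduct_smul, smul_eq_mul, smul_eq_mul, ← mul_assoc,
      ← sq, hs, inv_mul_eq_div, le_div_iff₀ h] at hle
    exact hle

lemma opNorm_bound {m : Type*} [Fintype m] [DecidableEq m] (Δ : Matrix m m ℝ) (u v : m → ℝ) :
    |u ⬝ᵥ (Δ *ᵥ v)| ≤ opNorm Δ * (√(∑ q, u q ^ 2) * √(∑ q, v q ^ 2)) := by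
  set T := (Matrix.toEuclideanLin (𝕜 := ℝ) (m := m) (n := m)).trans
      LinearMap.toContinuousLinearMap Δ with hT
  have h1 : u ⬝ᵥ (Δ *ᵥ v) = inner ℝ (WithLp.toLp 2 u) (T (WithLp.toLp 2 v)) := by
    simp [hT, PiLp.inner_apply, dotProduct, mul_comm]
  have hn : ∀ w : m → ℝ, ‖(WithLp.toLp 2 w : EuclideanSpace ℝ m)‖ = √(∑ q, w q ^ 2) := by
    intro w; simp [EuclideanSpace.norm_eq]
  rw [h1, ← hn, ← hn]
  calc _ ≤ ‖(WithLp.toLp 2 u : EuclideanSpace ℝ m)‖ * ‖T (WithLp.toLp 2 v)‖ :=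
        abs_real_inner_le_norm _ _
    _ ≤ ‖(WithLp.toLp 2 u : EuclideanSpace ℝ m)‖ * (‖T‖ * ‖(WithLp.toLp 2 v : EuclideanSpace ℝ m)‖) := by
        gcongr; exact T.le_opNorm _
    _ = _ := by unfold opNorm; rw [← hT]; ring


/-- Gram matrix entries. -/
def gr {n r p : ℕ} (Y : Matrix (Fin n × Fin r) (Fin p) ℝ) (q q' : Fin n × Fin r) : ℝ :=
  ∑ b, Y q b * Y q' b

/-- block inner products -/
def tau {n r p : ℕ} (Y : Matrix (Fin n × Fin r) (Fin p) ℝ) (i j : Fin n) : ℝ :=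
  ∑ a, ∑ b, Y (i, a) b * Y (j, a) b

lemma gr_symm {n r p : ℕ} (Y : Matrix (Fin n × Fin r) (Fin p) ℝ) (q q' : Fin n × Fin r) :
    gr Y q q' = gr Y q' q := Finset.sum_congr rfl fun _ _ => mul_comm _ _

lemma Feasible.gr_eq {n r p : ℕ} {Y : Matrix (Fin n × Fin r) (Fin p) ℝ} (hY : Feasible Y)
    (i : Fin n) (a c : Fin r) : gr Y (i, a) (i, c) = if a = c then 1 else 0 := by
  have := congrFun (congrFun (hY i) a) c
  simpa [mul_apply, blk, one_apply, gr] using this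

lemma tau_gr {n r p : ℕ} (Y : Matrix (Fin n × Fin r) (Fin p) ℝ) (i j : Fin n) :
    tau Y i j = ∑ a, gr Y (i, a) (j, a) := rfl

lemma Feasible.tau_self {n r p : ℕ} {Y : Matrix (Fin n × Fin r) (Fin p) ℝ} (hY : Feasible Y)
    (i : Fin n) : tau Y i i = r := by
  rw [tau_gr]; simp [hY.gr_eq]

/-- the test direction -/
def tdir {n r p : ℕ} (Y : Matrix (Fin n × Fin r) (Fin p) ℝ) (k : Fin r × Fin p) :
    Matrix (Fin n × Fin r) (Fin p) ℝ :=
  Matrix.of fun q b => (if q.2 = k.1 ∧ b = k.2 then 1 else 0) - Y q k.2 * Y (q.1, k.1) b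

lemma tdir_tangent {n r p : ℕ} {Y : Matrix (Fin n × Fin r) (Fin p) ℝ} (hY : Feasible Y)
    (k : Fin r × Fin p) (i : Fin n) :
    blk (tdir Y k) i * (blk Y i)ᵀ + blk Y i * (blk (tdir Y k) i)ᵀ = 0 := by
  have key : ∀ a c, ∑ b, tdir Y k (i, a) b * Y (i, c) b =
      (if a = k.1 then Y (i, c) k.2 else 0) - (if k.1 = c then Y (i, a) k.2 else 0) := by
    intro a c
    simp only [tdir, of_apply, sub_mul, Finset.sum_sub_distrib, mul_assoc, ← Finset.mul_sum]
    have := hY.gr_eq i k.1 c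
    rw [gr] at this
    rw [this]
    congr 1
    · simp [ite_and]
    · simp
  ext a c
  have h1 := key a c
  have h2 := key c a
  simp only [Matrix.add_apply, mul_apply, transpose_apply, blk, of_apply, Matrix.zero_apply]
  rw [h1]
  simp_rw [mul_comm (Y (i, a) _)]
  rw [h2]
  simp only [eq_comm (a := k.1)]
  ring

lemma tdir_sum {n r p : ℕ} {Y : Matrix (Fin n × Fin r) (Fin p) ℝ} (hY : Feasible Y)
    (q q' : Fin n × Fin r) :
    ∑ k, ∑ b, tdir Y k q b * tdir Y k q' b =
      ((p : ℝ) - 2) * (if q.2 = q'.2 then 1 else 0) + tau Y q.1 q'.1 * gr Y q q' := by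
  obtain ⟨i, a⟩ := q
  obtain ⟨j, c⟩ := q'
  have e : ∀ (k : Fin r × Fin p) b, tdir Y k (i, a) b * tdir Y k (j, c) b =
      (if a = k.1 ∧ b = k.2 then (if c = k.1 then 1 else 0) else 0)
      - (if a = k.1 ∧ b = k.2 then Y (j, c) k.2 * Y (j, k.1) b else 0)
      - (if c = k.1 ∧ b = k.2 then Y (i, a) k.2 * Y (i, k.1) b else 0)
      + (Y (i, a) k.2 * Y (j, c) k.2) * (Y (i, k.1) b * Y (j, k.1) b) := by
    intro k b
    simp only [tdir, of_apply]
    split_ifs <;> simp_all <;> ring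
  simp only [e, Finset.sum_add_distrib, Finset.sum_sub_distrib, Fintype.sum_prod_type]
  have t1 : ∑ a' : Fin r, ∑ b' : Fin p, ∑ b : Fin p,
      (if a = a' ∧ b = b' then (if c = a' then (1 : ℝ) else 0) else 0)
      = (p : ℝ) * (if a = c then 1 else 0) := by
    simp [ite_and, eq_comm]
  have t2 : ∀ (j : Fin n) (a c : Fin r), ∑ a' : Fin r, ∑ b' : Fin p, ∑ b : Fin p,
      (if a = a' ∧ b = b' then Y (j, c) b' * Y (j, a') b else 0)
      = (if a = c then 1 else 0) := by
    intro j a c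
    rw [← hY.gr_eq j a c, gr_symm]
    simp [ite_and, gr]
  have t3 : ∑ a' : Fin r, ∑ b' : Fin p, ∑ b : Fin p,
      (Y (i, a) b' * Y (j, c) b') * (Y (i, a') b * Y (j, a') b)
      = tau Y i j * gr Y (i, a) (j, c) := by
    simp only [← Finset.mul_sum, ← Finset.sum_mul]
    rw [mul_comm]; rfl
  rw [t1, t2, t2, t3]
  simp only [eq_comm (a := c)]
  ring

lemma trace_form {m κ : Type*} [Fintype m] [Fintype κ] (S : Matrix m m ℝ) (Q : Matrix m κ ℝ) :
    (S * Q * Qᵀ).trace = ∑ q, ∑ q', S q q' * ∑ b, Q q b * Q q' b := by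
  rw [Matrix.mul_assoc]
  simp only [trace, diag, mul_apply, transpose_apply]
  refine Finset.sum_congr rfl fun q _ => Finset.sum_congr rfl fun q' _ => ?_
  congr 1
  exact Finset.sum_congr rfl fun _ _ => mul_comm _ _

lemma second_order {n r p : ℕ} {Y : Matrix (Fin n × Fin r) (Fin p) ℝ} (hY : Feasible Y)
    (Lh : Matrix (Fin n × Fin r) (Fin n × Fin r) ℝ)
    (hsec : ∀ Ydot : Matrix (Fin n × Fin r) (Fin p) ℝ,
      (∀ i, blk Ydot i * (blk Y i)ᵀ + blk Y i * (blk Ydot i)ᵀ = 0) →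
      0 ≤ (Smat Lh Y * Ydot * Ydotᵀ).trace) :
    0 ≤ ∑ q, ∑ q', Lh q q' * (((p : ℝ) - 2) * ((if q.2 = q'.2 then 1 else 0) - gr Y q q')
      + (tau Y q.1 q'.1 - r) * gr Y q q') := by
  have h1 : 0 ≤ ∑ q, ∑ q', Smat Lh Y q q' *
      (((p : ℝ) - 2) * (if q.2 = q'.2 then 1 else 0) + tau Y q.1 q'.1 * gr Y q q') := by
    have : 0 ≤ ∑ k, (Smat Lh Y * tdir Y k * (tdir Y k)ᵀ).trace :=
      Finset.sum_nonneg fun k _ => hsec _ (tdir_tangent hY k)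
    simp only [trace_form] at this
    rw [Finset.sum_comm] at this
    simp only [Finset.sum_comm (s := (Finset.univ : Finset (Fin r × Fin p)))] at this
    simp only [← Finset.mul_sum] at this
    simpa only [tdir_sum hY] using this
  have h2 : ∀ q q', SBD (Lh * Y * Yᵀ) q q' *
      (((p : ℝ) - 2) * (if q.2 = q'.2 then 1 else 0) + tau Y q.1 q'.1 * gr Y q q') =
      if q = q' then ((p : ℝ) - 2 + r) * (Lh * Y * Yᵀ) q q else 0 := by
    rintro ⟨i, a⟩ ⟨j, c⟩
    by_cases hij : i = j
    · subst hij
      simp only [SBD, of_apply, hY.gr_eq, hY.tau_self]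
      by_cases hac : a = c
      · subst hac; simp; ring
      · simp [hac]
    · simp [SBD, hij]
  have h3 : ∀ q, (Lh * Y * Yᵀ) q q = ∑ q', Lh q q' * gr Y q q' := by
    intro q
    rw [Matrix.mul_assoc, mul_apply]
    refine Finset.sum_congr rfl fun q' _ => ?_
    rw [gr_symm]; simp [mul_apply, gr]
  refine h1.trans_eq ?_
  refine Finset.sum_congr rfl fun q _ => ?_
  have h4 : ∀ q', Smat Lh Y q q' *
      (((p : ℝ) - 2) * (if q.2 = q'.2 then 1 else 0) + tau Y q.1 q'.1 * gr Y q q') =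
      Lh q q' * (((p : ℝ) - 2) * (if q.2 = q'.2 then 1 else 0) + tau Y q.1 q'.1 * gr Y q q')
      - if q = q' then ((p : ℝ) - 2 + r) * (Lh * Y * Yᵀ) q q else 0 := by
    intro q'
    rw [← h2, ← sub_mul]; rfl
  simp only [h4]
  rw [Finset.sum_sub_distrib]
  simp only [Finset.sum_ite_eq, Finset.mem_univ, if_true, h3, Finset.mul_sum]
  rw [← Finset.sum_sub_distrib]
  refine Finset.sum_congr rfl fun q' _ => ?_
  ring


/-- mean block -/
noncomputable def Rm {n r p : ℕ} (Y : Matrix (Fin n × Fin r) (Fin p) ℝ) (a : Fin r) (b : Fin p) : ℝ :=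
  (∑ i, Y (i, a) b) / n

/-- deviation from the mean block -/
noncomputable def Wm {n r p : ℕ} (Y : Matrix (Fin n × Fin r) (Fin p) ℝ) (q : Fin n × Fin r)
    (b : Fin p) : ℝ := Y q b - Rm Y q.2 b

/-- squared norm of deviation block -/
noncomputable def wm {n r p : ℕ} (Y : Matrix (Fin n × Fin r) (Fin p) ℝ) (i : Fin n) : ℝ :=
  ∑ a, ∑ b, Wm Y (i, a) b ^ 2

lemma Rm_mul {n r p : ℕ} (hn : 1 ≤ n) (Y : Matrix (Fin n × Fin r) (Fin p) ℝ) (a : Fin r)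
    (b : Fin p) : ∑ i, Y (i, a) b = n * Rm Y a b := by
  have : (n : ℝ) ≠ 0 := by positivity
  rw [Rm]; field_simp

lemma Wm_sum {n r p : ℕ} (hn : 1 ≤ n) (Y : Matrix (Fin n × Fin r) (Fin p) ℝ) (a : Fin r)
    (b : Fin p) : ∑ i, Wm Y (i, a) b = 0 := by
  simp [Wm, Finset.sum_sub_distrib, Rm_mul hn]

lemma Wm_gram {n r p : ℕ} (hn : 1 ≤ n) {Y : Matrix (Fin n × Fin r) (Fin p) ℝ} (hY : Feasible Y)
    (a c : Fin r) : ∑ i, ∑ b, Wm Y (i, a) b * Wm Y (i, c) b =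
      n * ((if a = c then 1 else 0) - ∑ b, Rm Y a b * Rm Y c b) := by
  have h1 : ∑ i : Fin n, gr Y (i, a) (i, c) = n * (if a = c then 1 else 0) := by
    simp [hY.gr_eq]
  rw [mul_sub, ← h1]
  simp only [gr]
  rw [Finset.sum_comm, Finset.sum_comm (f := fun i b => Y (i, a) b * Y (i, c) b), Finset.mul_sum,
    ← Finset.sum_sub_distrib]
  refine Finset.sum_congr rfl fun b _ => ?_
  have e : ∀ i, Wm Y (i, a) b * Wm Y (i, c) b = Y (i, a) b * Y (i, c) b - Y (i, a) b * Rm Y c b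
      - Rm Y a b * Y (i, c) b + Rm Y a b * Rm Y c b := by
    intro i; simp only [Wm]; ring
  simp only [e, Finset.sum_add_distrib, Finset.sum_sub_distrib, ← Finset.sum_mul,
    ← Finset.mul_sum, Rm_mul hn]
  simp
  ring

lemma NS_blocks {n r p : ℕ} (P : Fin n × Fin r → Fin p → ℝ) :
    NS P = ∑ i, ∑ a, ∑ b, P (i, a) b ^ 2 := by
  simp [NS, Fintype.sum_prod_type]

lemma NS_Wm {n r p : ℕ} (Y : Matrix (Fin n × Fin r) (Fin p) ℝ) :
    NS (Wm Y) = ∑ i, wm Y i := NS_blocks _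

lemma NS_Wm' {n r p : ℕ} (hn : 1 ≤ n) {Y : Matrix (Fin n × Fin r) (Fin p) ℝ} (hY : Feasible Y) :
    NS (Wm Y) = n * (r - ∑ a, ∑ b, Rm Y a b ^ 2) := by
  rw [NS_blocks, Finset.sum_comm]
  have := fun a => Wm_gram hn hY a a
  simp only [← sq] at this
  simp only [this, ← Finset.mul_sum, Finset.sum_sub_distrib]
  simp

lemma NS_Y {n r p : ℕ} {Y : Matrix (Fin n × Fin r) (Fin p) ℝ} (hY : Feasible Y) :
    NS Y = r * n := by
  refine (NS_blocks _).trans ?_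
  have := fun i => hY.tau_self i
  simp only [tau, ← sq] at this
  simp only [this]
  simp [mul_comm]

lemma dist_tau {n r p : ℕ} {Y : Matrix (Fin n × Fin r) (Fin p) ℝ} (hY : Feasible Y)
    (i j : Fin n) : ∑ a, ∑ b, (Y (i, a) b - Y (j, a) b) ^ 2 = 2 * (r - tau Y i j) := by
  have hi := hY.tau_self i
  have hj := hY.tau_self j
  have : ∑ a, ∑ b, (Y (i, a) b - Y (j, a) b) ^ 2 = tau Y i i + tau Y j j - 2 * tau Y i j := by
    simp only [tau, Finset.mul_sum, ← Finset.sum_add_distrib, ← Finset.sum_sub_distrib]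
    refine Finset.sum_congr rfl fun a _ => Finset.sum_congr rfl fun b _ => by ring
  rw [this, hi, hj]; ring

lemma tau_le {n r p : ℕ} {Y : Matrix (Fin n × Fin r) (Fin p) ℝ} (hY : Feasible Y)
    (i j : Fin n) : tau Y i j ≤ r := by
  have h := dist_tau hY i j
  have : 0 ≤ ∑ a, ∑ b, (Y (i, a) b - Y (j, a) b) ^ 2 :=
    Finset.sum_nonneg fun _ _ => Finset.sum_nonneg fun _ _ => sq_nonneg _
  linarith

lemma tau_Wm {n r p : ℕ} {Y : Matrix (Fin n × Fin r) (Fin p) ℝ} (hY : Feasible Y)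
    (i j : Fin n) : (r : ℝ) - tau Y i j =
      wm Y i / 2 + wm Y j / 2 - ∑ k : Fin r × Fin p, Wm Y (i, k.1) k.2 * Wm Y (j, k.1) k.2 := by
  have h := dist_tau hY i j
  have : ∑ a, ∑ b, (Y (i, a) b - Y (j, a) b) ^ 2 = wm Y i + wm Y j
      - 2 * ∑ k : Fin r × Fin p, Wm Y (i, k.1) k.2 * Wm Y (j, k.1) k.2 := by
    simp only [wm, Fintype.sum_prod_type, Finset.mul_sum, ← Finset.sum_add_distrib,
      ← Finset.sum_sub_distrib]
    refine Finset.sum_congr rfl fun a _ => Finset.sum_congr rfl fun b _ => ?_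
    simp only [Wm]; ring
  linarith

lemma wm_nonneg {n r p : ℕ} (Y : Matrix (Fin n × Fin r) (Fin p) ℝ) (i : Fin n) : 0 ≤ wm Y i :=
  Finset.sum_nonneg fun _ _ => Finset.sum_nonneg fun _ _ => sq_nonneg _

lemma Rm_le {n r p : ℕ} (hn : 1 ≤ n) {Y : Matrix (Fin n × Fin r) (Fin p) ℝ} (hY : Feasible Y) :
    ∑ a, ∑ b, Rm Y a b ^ 2 ≤ r := by
  have h := NS_Wm' hn hY
  have h0 := NS_nonneg (Wm Y)
  have hn' : (0 : ℝ) < n := by exact_mod_cast hn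
  rw [h] at h0
  have := nonneg_of_mul_nonneg_right h0 hn'
  linarith

lemma wm_le {n r p : ℕ} (hn : 1 ≤ n) {Y : Matrix (Fin n × Fin r) (Fin p) ℝ} (hY : Feasible Y)
    (i : Fin n) : wm Y i ≤ 4 * r := by
  have h1 : wm Y i ≤ 2 * tau Y i i + 2 * ∑ a, ∑ b, Rm Y a b ^ 2 := by
    simp only [wm, tau, Finset.mul_sum, ← Finset.sum_add_distrib]
    refine Finset.sum_le_sum fun a _ => Finset.sum_le_sum fun b _ => ?_
    simp only [Wm]
    nlinarith [sq_nonneg (Y (i, a) b + Rm Y a b)]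
  have := Rm_le hn hY
  rw [hY.tau_self] at h1
  linarith

lemma noise_bound {n r p : ℕ} (hn : 1 ≤ n) (hp : 2 ≤ p) {Y : Matrix (Fin n × Fin r) (Fin p) ℝ}
    (hY : Feasible Y) (Δ : Matrix (Fin n × Fin r) (Fin n × Fin r) ℝ) (δ : ℝ) (hδ : 0 ≤ δ)
    (hΔ : ∀ u v : Fin n × Fin r → ℝ,
      |u ⬝ᵥ (Δ *ᵥ v)| ≤ δ * (√(∑ q, u q ^ 2) * √(∑ q, v q ^ 2))) :
    ∑ q, ∑ q', Δ q q' * (((p : ℝ) - 2) * (gr Y q q' - (if q.2 = q'.2 then 1 else 0))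
      + (r - tau Y q.1 q'.1) * gr Y q q') ≤
      3 * ((p : ℝ) + r - 2) * (δ * (√(r * n) * √(NS (Wm Y)))) := by
  have hn' : (0 : ℝ) < n := by exact_mod_cast hn
  have hp' : (0 : ℝ) ≤ (p : ℝ) - 2 := by
    have : (2 : ℝ) ≤ p := by exact_mod_cast hp
    linarith
  set V : Fin n × Fin r → Fin p → ℝ := fun q b => Rm Y q.2 b with hV
  set H : Fin n × Fin r → Fin n × Fin p → ℝ := fun q k => Wm Y (k.1, q.2) k.2 * (√(n : ℝ))⁻¹ with hH
  set B : Fin n × Fin r → Fin p → ℝ := fun q b => wm Y q.1 * Y q b with hB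
  set K : Fin n × Fin r → (Fin r × Fin p) × Fin p → ℝ :=
    fun q k => Wm Y (q.1, k.1.1) k.1.2 * Y q k.2 with hK
  have hsq : (√(n : ℝ))⁻¹ * (√(n : ℝ))⁻¹ = (n : ℝ)⁻¹ := by
    rw [← mul_inv, Real.mul_self_sqrt hn'.le]
  have hdec : ∑ q, ∑ q', Δ q q' * (((p : ℝ) - 2) * (gr Y q q' - (if q.2 = q'.2 then 1 else 0))
      + (r - tau Y q.1 q'.1) * gr Y q q') =
      ((p : ℝ) - 2) * (BF Δ (Wm Y) Y + BF Δ V (Wm Y) - BF Δ H H) +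
      (BF Δ B Y / 2 + BF Δ Y B / 2 - BF Δ K K) := by
    simp only [BF, Finset.mul_sum (s := (Finset.univ : Finset (Fin n × Fin r))), Finset.sum_div,
      ← Finset.sum_add_distrib, ← Finset.sum_sub_distrib]
    refine Finset.sum_congr rfl fun q _ => Finset.sum_congr rfl fun q' _ => ?_
    have e1 : gr Y q q' = ∑ b, Wm Y q b * Y q' b + ∑ b, V q b * Wm Y q' b
        + ∑ b, Rm Y q.2 b * Rm Y q'.2 b := by
      simp only [gr, ← Finset.sum_add_distrib]
      refine Finset.sum_congr rfl fun b _ => ?_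
      simp only [Wm, hV]; ring
    have e2 : ∑ k, H q k * H q' k = (if q.2 = q'.2 then 1 else 0)
        - ∑ b, Rm Y q.2 b * Rm Y q'.2 b := by
      have : ∀ k, H q k * H q' k = (n : ℝ)⁻¹ * (Wm Y (k.1, q.2) k.2 * Wm Y (k.1, q'.2) k.2) := by
        intro k; rw [← hsq]; simp only [hH]; ring
      simp only [this, ← Finset.mul_sum]
      rw [Fintype.sum_prod_type]
      simp only
      rw [Wm_gram hn hY, inv_mul_cancel_left₀ hn'.ne']
    have e3 : ∑ b, B q b * Y q' b = wm Y q.1 * gr Y q q' := by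
      simp only [gr, hB, Finset.mul_sum, mul_assoc]
    have e4 : ∑ b, Y q b * B q' b = wm Y q'.1 * gr Y q q' := by
      simp only [gr, hB, Finset.mul_sum]
      exact Finset.sum_congr rfl fun _ _ => by ring
    have e5 : ∑ k, K q k * K q' k =
        (∑ k : Fin r × Fin p, Wm Y (q.1, k.1) k.2 * Wm Y (q'.1, k.1) k.2) * gr Y q q' := by
      rw [Fintype.sum_prod_type]
      simp only [gr, hK, Finset.sum_mul_sum]
      exact Finset.sum_congr rfl fun _ _ => Finset.sum_congr rfl fun _ _ => by ring
    rw [e2, e3, e4, e5, tau_Wm hY]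
    have e1' : gr Y q q' - (if q.2 = q'.2 then 1 else 0) = ∑ b, Wm Y q b * Y q' b
      + ∑ b, V q b * Wm Y q' b - ((if q.2 = q'.2 then 1 else 0)
        - ∑ b, Rm Y q.2 b * Rm Y q'.2 b) := by linarith
    rw [e1']
    ring
  set s := √((r : ℝ) * n) with hs
  set ω := √(NS (Wm Y)) with hω
  have hs0 : 0 ≤ s := Real.sqrt_nonneg _
  have hω0 : 0 ≤ ω := Real.sqrt_nonneg _
  have hr0 : (0 : ℝ) ≤ r := Nat.cast_nonneg r
  have hR0 : 0 ≤ ∑ a, ∑ b, Rm Y a b ^ 2 :=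
    Finset.sum_nonneg fun _ _ => Finset.sum_nonneg fun _ _ => sq_nonneg _
  have hωs : ω ≤ s := by
    refine Real.sqrt_le_sqrt ?_
    rw [NS_Wm' hn hY]; nlinarith
  have nY : √(NS Y) = s := by rw [NS_Y hY]
  have nV : √(NS V) ≤ s := by
    refine Real.sqrt_le_sqrt ?_
    rw [NS_blocks]
    simp only [hV, Finset.sum_const, Finset.card_univ, Fintype.card_fin, nsmul_eq_mul]
    have := Rm_le hn hY
    nlinarith
  have nH : NS H = NS (Wm Y) := by
    rw [NS_blocks]
    simp only [NS, Fintype.sum_prod_type, hH, mul_pow, sq (√(n : ℝ))⁻¹, hsq, ← Finset.sum_mul]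
    simp only [Finset.sum_const, Finset.card_univ, Fintype.card_fin, nsmul_eq_mul]
    rw [Finset.sum_comm]
    field_simp
  have nK : NS K = r * NS (Wm Y) := by
    rw [NS_Wm, Finset.mul_sum]
    simp only [NS]
    rw [Fintype.sum_prod_type]
    refine Finset.sum_congr rfl fun i _ => ?_
    have : ∀ a, ∑ k, K (i, a) k ^ 2 = wm Y i * ∑ b, Y (i, a) b * Y (i, a) b := by
      intro a
      rw [Fintype.sum_prod_type, wm]
      rw [← Fintype.sum_prod_type' (f := fun a b => Wm Y (i, a) b ^ 2)]
      simp only [hK, Finset.sum_mul_sum]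
      exact Finset.sum_congr rfl fun _ _ => Finset.sum_congr rfl fun _ _ => by ring
    simp only [this, ← Finset.mul_sum]
    rw [show ∑ a, ∑ b, Y (i, a) b * Y (i, a) b = r from hY.tau_self i, mul_comm]
  have nB : √(NS B) ≤ 2 * r * ω := by
    have h1 : NS B ≤ (2 * r) ^ 2 * NS (Wm Y) := by
      rw [NS_Wm, Finset.mul_sum, NS_blocks]
      refine Finset.sum_le_sum fun i _ => ?_
      have : ∑ a, ∑ b, B (i, a) b ^ 2 = wm Y i ^ 2 * tau Y i i := by
        simp only [tau, hB, Finset.mul_sum]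
        exact Finset.sum_congr rfl fun _ _ => Finset.sum_congr rfl fun _ _ => by ring
      rw [this, hY.tau_self]
      have h3 := wm_le hn hY i
      have h4 := wm_nonneg Y i
      nlinarith [mul_nonneg (mul_nonneg h4 hr0) (sub_nonneg.2 h3)]
    calc √(NS B) ≤ √((2 * r) ^ 2 * NS (Wm Y)) := Real.sqrt_le_sqrt h1
      _ = 2 * r * ω := by rw [Real.sqrt_mul (by positivity), Real.sqrt_sq (by positivity)]
  have hωω : √(NS (Wm Y)) * √(NS (Wm Y)) ≤ s * ω := by
    rw [← hω]; exact mul_le_mul_of_nonneg_right hωs hω0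
  have hNS0 := NS_nonneg (Wm Y)
  have b1 : BF Δ (Wm Y) Y ≤ δ * (s * ω) := by
    refine (le_abs_self _).trans ((BF_bound Δ δ hδ hΔ _ _).trans ?_)
    rw [nY, mul_comm s]
  have b2 : BF Δ V (Wm Y) ≤ δ * (s * ω) := by
    refine (le_abs_self _).trans ((BF_bound Δ δ hδ hΔ _ _).trans ?_)
    gcongr
  have b3 : -BF Δ H H ≤ δ * (s * ω) := by
    refine (neg_le_abs _).trans ((BF_bound Δ δ hδ hΔ _ _).trans ?_)
    rw [nH]; gcongr
  have b4 : BF Δ B Y ≤ 2 * r * (δ * (s * ω)) := by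
    refine (le_abs_self _).trans ((BF_bound Δ δ hδ hΔ _ _).trans ?_)
    rw [nY]
    calc δ * (√(NS B) * s) ≤ δ * (2 * r * ω * s) := by gcongr
      _ = _ := by ring
  have b5 : BF Δ Y B ≤ 2 * r * (δ * (s * ω)) := by
    refine (le_abs_self _).trans ((BF_bound Δ δ hδ hΔ _ _).trans ?_)
    rw [nY]
    calc δ * (s * √(NS B)) ≤ δ * (s * (2 * r * ω)) := by gcongr
      _ = _ := by ring
  have b6 : -BF Δ K K ≤ r * (δ * (s * ω)) := by
    refine (neg_le_abs _).trans ((BF_bound Δ δ hδ hΔ _ _).trans ?_)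
    rw [nK, Real.mul_self_sqrt (by positivity)]
    rw [Real.mul_self_sqrt hNS0] at hωω
    calc δ * (r * NS (Wm Y)) ≤ δ * (r * (s * ω)) := by gcongr
      _ = _ := by ring
  rw [hdec]
  have b7 : ((p : ℝ) - 2) * (BF Δ (Wm Y) Y + BF Δ V (Wm Y) - BF Δ H H) ≤
      ((p : ℝ) - 2) * (3 * (δ * (s * ω))) := mul_le_mul_of_nonneg_left (by linarith) hp'
  linarith

lemma lap_tau {n r p : ℕ} (G : SimpleGraph (Fin n)) [DecidableRel G.Adj] (hn : 1 ≤ n)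
    {Y : Matrix (Fin n × Fin r) (Fin p) ℝ} (hY : Feasible Y) :
    lam2 (G.lapMatrix ℝ) * NS (Wm Y) ≤ ∑ i, ∑ j, G.adjMatrix ℝ i j * (r - tau Y i j) := by
  have h1 : ∀ a b, lam2 (G.lapMatrix ℝ) * ∑ i, Wm Y (i, a) b ^ 2 ≤
      (∑ i, ∑ j, G.adjMatrix ℝ i j * (Y (i, a) b - Y (j, a) b) ^ 2) / 2 := by
    intro a b
    refine (lam2_le G _ (Wm_sum hn Y a b)).trans_eq ?_
    rw [lap_quad]
    simp [Wm]
  have h2 : lam2 (G.lapMatrix ℝ) * NS (Wm Y) =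
      ∑ a, ∑ b, lam2 (G.lapMatrix ℝ) * ∑ i, Wm Y (i, a) b ^ 2 := by
    rw [NS_blocks]
    simp only [← Finset.mul_sum]
    rw [Finset.sum_comm]
    congr 1
    exact Finset.sum_congr rfl fun a _ => Finset.sum_comm
  have h3 : ∑ i, ∑ j, G.adjMatrix ℝ i j * (r - tau Y i j) =
      ∑ a, ∑ b, (∑ i, ∑ j, G.adjMatrix ℝ i j * (Y (i, a) b - Y (j, a) b) ^ 2) / 2 := by
    have : ∀ i j, G.adjMatrix ℝ i j * (r - tau Y i j) =
        ∑ k : Fin r × Fin p, G.adjMatrix ℝ i j * (Y (i, k.1) k.2 - Y (j, k.1) k.2) ^ 2 / 2 := by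
      intro i j
      rw [← Finset.sum_div, ← Finset.mul_sum, Fintype.sum_prod_type]
      simp only
      rw [dist_tau hY]; ring
    simp only [this]
    rw [← Fintype.sum_prod_type' (f := fun a b => (∑ i, ∑ j, G.adjMatrix ℝ i j * (Y (i, a) b - Y (j, a) b) ^ 2) / 2)]
    conv_lhs => enter [2, i]; rw [Finset.sum_comm]
    rw [Finset.sum_comm]
    simp only [Finset.sum_div]
  rw [h2, h3]
  exact Finset.sum_le_sum fun a _ => Finset.sum_le_sum fun b _ => h1 a b


lemma kron_sum {n r : ℕ} (L : Matrix (Fin n) (Fin n) ℝ) (f : Fin n × Fin r → Fin n × Fin r → ℝ) :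
    ∑ q, ∑ q', (L ⊗ₖ (1 : Matrix (Fin r) (Fin r) ℝ)) q q' * f q q' =
      ∑ i, ∑ j, L i j * ∑ a, f (i, a) (j, a) := by
  simp only [Fintype.sum_prod_type, kroneckerMap_apply, one_apply, mul_ite, mul_one, mul_zero,
    ite_mul, zero_mul, Finset.sum_ite_eq, Finset.mem_univ, if_true, Finset.mul_sum]
  exact Finset.sum_congr rfl fun i _ => Finset.sum_comm

lemma adj_nonneg {n : ℕ} (G : SimpleGraph (Fin n)) [DecidableRel G.Adj] (i j : Fin n) :
    0 ≤ G.adjMatrix ℝ i j := by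
  rw [SimpleGraph.adjMatrix_apply]; split_ifs <;> norm_num

lemma F_bound {n r p : ℕ} (hn : 1 ≤ n) (hp : r + 2 < p)
    (G : SimpleGraph (Fin n)) [DecidableRel G.Adj]
    {Y : Matrix (Fin n × Fin r) (Fin p) ℝ} (hY : Feasible Y)
    (Δ : Matrix (Fin n × Fin r) (Fin n × Fin r) ℝ) (δ : ℝ) (hδ : 0 ≤ δ)
    (hΔ : ∀ u v : Fin n × Fin r → ℝ,
      |u ⬝ᵥ (Δ *ᵥ v)| ≤ δ * (√(∑ q, u q ^ 2) * √(∑ q, v q ^ 2)))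
    (hsec : ∀ Ydot : Matrix (Fin n × Fin r) (Fin p) ℝ,
      (∀ i, blk Ydot i * (blk Y i)ᵀ + blk Y i * (blk Ydot i)ᵀ = 0) →
      0 ≤ (Smat (G.lapMatrix ℝ ⊗ₖ (1 : Matrix (Fin r) (Fin r) ℝ) - Δ) Y * Ydot * Ydotᵀ).trace) :
    ((p : ℝ) - r - 2) * ∑ i, ∑ j, G.adjMatrix ℝ i j * (r - tau Y i j) ≤
      3 * ((p : ℝ) + r - 2) * (δ * (√(r * n) * √(NS (Wm Y)))) := by
  have h1 := second_order hY _ hsec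
  have h2 := noise_bound hn (by omega) hY Δ δ hδ hΔ
  set f : Fin n × Fin r → Fin n × Fin r → ℝ := fun q q' =>
    ((p : ℝ) - 2) * ((if q.2 = q'.2 then 1 else 0) - gr Y q q')
      + (tau Y q.1 q'.1 - r) * gr Y q q' with hf
  have h3 : ∑ q, ∑ q', (G.lapMatrix ℝ ⊗ₖ (1 : Matrix (Fin r) (Fin r) ℝ) - Δ) q q' * f q q' =
      ∑ i, ∑ j, G.lapMatrix ℝ i j * ∑ a, f (i, a) (j, a) +
      ∑ q, ∑ q', Δ q q' * (((p : ℝ) - 2) * (gr Y q q' - (if q.2 = q'.2 then 1 else 0))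
      + (r - tau Y q.1 q'.1) * gr Y q q') := by
    rw [← kron_sum]
    simp only [← Finset.sum_add_distrib]
    refine Finset.sum_congr rfl fun q _ => Finset.sum_congr rfl fun q' _ => ?_
    rw [Matrix.sub_apply]
    simp only [hf]; ring
  have h4 : ∀ i j, ∑ a, f (i, a) (j, a) = (r - tau Y i j) * ((p : ℝ) - 2 - tau Y i j) := by
    intro i j
    simp only [hf, Finset.sum_add_distrib, ← Finset.mul_sum, Finset.sum_sub_distrib, ← tau_gr]
    simp
    ring
  have h5 : ∑ i, ∑ j, G.lapMatrix ℝ i j * ∑ a, f (i, a) (j, a) ≤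
      -(((p : ℝ) - r - 2) * ∑ i, ∑ j, G.adjMatrix ℝ i j * (r - tau Y i j)) := by
    simp only [h4]
    have := fun i => lap_sum G (fun i j => (r - tau Y i j) * ((p : ℝ) - 2 - tau Y i j)) i
    simp only [this, hY.tau_self, Finset.mul_sum, ← Finset.sum_neg_distrib]
    refine Finset.sum_le_sum fun i _ => Finset.sum_le_sum fun j _ => ?_
    have ht := tau_le hY i j
    have ha := adj_nonneg G i j
    nlinarith [mul_nonneg ha (mul_nonneg (sub_nonneg.2 ht) (sub_nonneg.2 ht))]
  rw [h3] at h1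
  linarith

lemma arith {l F ω t : ℝ} (hl : 0 < l) (hF : 0 ≤ F) (hω : l * ω ^ 2 ≤ F)
    (h : F ≤ 3 / 2 * t * ω) (ht0 : 0 ≤ t) (ht : 5 * t ^ 2 ≤ l ^ 2) : F ≤ 45 / 100 * l := by
  rcases hF.eq_or_lt with h0 | h0
  · rw [← h0]; positivity
  have hω0 : 0 < ω := by
    by_contra hc
    push Not at hc
    nlinarith [mul_nonneg ht0 (neg_nonneg.2 hc)]
  have h1 : F * F ≤ 9 / 4 * t ^ 2 * ω ^ 2 := by
    have := mul_le_mul h h hF (by positivity)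
    linarith
  have h2 : F * l ≤ 9 / 4 * t ^ 2 := by
    have : F * (l * F) ≤ F * (9 / 4 * t ^ 2) := by nlinarith [sq_nonneg t]
    nlinarith [le_of_mul_le_mul_left this h0]
  have : F * l ≤ (45 / 100 * l) * l := by nlinarith
  exact le_of_mul_le_mul_right this hl

lemma quad_form {m : Type*} [Fintype m] (S : Matrix m m ℝ) (x : m → ℝ) :
    x ⬝ᵥ (S *ᵥ x) = ∑ q, ∑ q', S q q' * (x q * x q') := by
  simp only [dotProduct, mulVec, Finset.mul_sum]
  exact Finset.sum_congr rfl fun _ _ => Finset.sum_congr rfl fun _ _ => by ring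

lemma core {n r p : ℕ} (hn : 1 ≤ n) (hr : 1 ≤ r) (hp : r + 2 < p)
    (G : SimpleGraph (Fin n)) [DecidableRel G.Adj]
    {Y : Matrix (Fin n × Fin r) (Fin p) ℝ} (hY : Feasible Y)
    (Δ : Matrix (Fin n × Fin r) (Fin n × Fin r) ℝ) (δ : ℝ) (hδ : 0 ≤ δ)
    (hΔ : ∀ u v : Fin n × Fin r → ℝ,
      |u ⬝ᵥ (Δ *ᵥ v)| ≤ δ * (√(∑ q, u q ^ 2) * √(∑ q, v q ^ 2)))
    (Cp : ℝ) (hCp : Cp = 2 * ((p : ℝ) + r - 2) / ((p : ℝ) - r - 2))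
    (hsmall : δ < lam2 (G.lapMatrix ℝ) / (√5 * Cp * √(r * n)))
    (hsec : ∀ Ydot : Matrix (Fin n × Fin r) (Fin p) ℝ,
      (∀ i, blk Ydot i * (blk Y i)ᵀ + blk Y i * (blk Ydot i)ᵀ = 0) →
      0 ≤ (Smat (G.lapMatrix ℝ ⊗ₖ (1 : Matrix (Fin r) (Fin r) ℝ) - Δ) Y * Ydot * Ydotᵀ).trace)
    (x : Fin n × Fin r → ℝ) (hx : ∀ a, ∑ i, x (i, a) = 0) (hx0 : x ≠ 0) :
    0 < x ⬝ᵥ (Smat (G.lapMatrix ℝ ⊗ₖ (1 : Matrix (Fin r) (Fin r) ℝ) - Δ) Y *ᵥ x) := by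
  have hF := F_bound hn hp G hY Δ δ hδ hΔ hsec
  have hlap := lap_tau G hn hY
  set F := ∑ i, ∑ j, G.adjMatrix ℝ i j * (r - tau Y i j) with hFdef
  set l := lam2 (G.lapMatrix ℝ) with hl
  have hn' : (1 : ℝ) ≤ n := by exact_mod_cast hn
  have hr' : (1 : ℝ) ≤ r := by exact_mod_cast hr
  have hp' : (r : ℝ) + 2 < p := by exact_mod_cast hp
  have ha : 0 < (p : ℝ) - r - 2 := by linarith
  have hCp2 : 2 ≤ Cp := by
    rw [hCp, le_div_iff₀ ha]; linarith
  have hs1 : 1 ≤ √((r : ℝ) * n) := by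
    rw [Real.one_le_sqrt]; nlinarith
  set s := √((r : ℝ) * n) with hs
  have h5 : √(5 : ℝ) ^ 2 = 5 := Real.sq_sqrt (by norm_num)
  have h5' : 2 < √(5 : ℝ) := by
    rw [Real.lt_sqrt (by norm_num)]; norm_num
  have hden : 0 < √5 * Cp * s := by positivity
  have hlt : δ * (√5 * Cp * s) < l := (lt_div_iff₀ hden).1 hsmall
  have hlpos : 0 < l := lt_of_le_of_lt (by positivity) hlt
  have hF0 : 0 ≤ F := Finset.sum_nonneg fun i _ => Finset.sum_nonneg fun j _ =>
    mul_nonneg (adj_nonneg G i j) (sub_nonneg.2 (tau_le hY i j))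
  have hFl : F ≤ 45 / 100 * l := by
    refine arith (ω := √(NS (Wm Y))) (t := Cp * (δ * s)) hlpos hF0 ?_ ?_ (by positivity) ?_
    · rw [Real.sq_sqrt (NS_nonneg _)]; exact hlap
    · have : ((p : ℝ) - r - 2) * F ≤
          ((p : ℝ) - r - 2) * (3 / 2 * (Cp * (δ * s)) * √(NS (Wm Y))) := by
        refine hF.trans_eq ?_
        rw [hCp]; field_simp
      exact le_of_mul_le_mul_left this ha
    · have h6 : (√5 * (Cp * (δ * s))) ^ 2 ≤ l ^ 2 := by
        refine pow_le_pow_left₀ (by positivity) ?_ 2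
        nlinarith
      rwa [mul_pow, h5] at h6
  have hδs : 4 * (δ * s) ≤ l := by
    have : (2 * 2) * (δ * s) ≤ (√5 * Cp) * (δ * s) := by gcongr
    nlinarith
  have hδ4 : 4 * δ ≤ l := by nlinarith
  -- the quadratic form
  set X := ∑ q, x q ^ 2 with hX
  have hXpos : 0 < X := by
    obtain ⟨q, hq⟩ := Function.ne_iff.1 hx0
    exact Finset.sum_pos' (fun _ _ => sq_nonneg _) ⟨q, Finset.mem_univ _, by
      have : x q ≠ 0 := hq
      positivity⟩
  have hXb : X = ∑ i, ∑ a, x (i, a) ^ 2 := by rw [hX, Fintype.sum_prod_type]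
  set ξ : Fin n → ℝ := fun i => ∑ a, x (i, a) ^ 2 with hξ
  have hξ0 : ∀ i, 0 ≤ ξ i := fun i => Finset.sum_nonneg fun _ _ => sq_nonneg _
  have hξX : ∀ i, ξ i ≤ X := fun i => by
    rw [hXb]; exact Finset.single_le_sum (f := ξ) (fun j _ => hξ0 j) (Finset.mem_univ i)
  set M1 := (G.lapMatrix ℝ ⊗ₖ (1 : Matrix (Fin r) (Fin r) ℝ)) with hM1
  have q1 : l * X ≤ ∑ q, ∑ q', M1 q q' * (x q * x q') := by
    rw [hM1, kron_sum]
    have e : ∑ i, ∑ j, G.lapMatrix ℝ i j * ∑ a, x (i, a) * x (j, a) =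
        ∑ a, (fun i => x (i, a)) ⬝ᵥ (G.lapMatrix ℝ *ᵥ (fun i => x (i, a))) := by
      simp only [quad_form, Finset.mul_sum]
      conv_lhs => enter [2, i]; rw [Finset.sum_comm]
      rw [Finset.sum_comm]
    rw [e, hXb, Finset.sum_comm, Finset.mul_sum]
    exact Finset.sum_le_sum fun a _ => lam2_le G _ (hx a)
  have q2 : ∑ q, ∑ q', Δ q q' * (x q * x q') ≤ δ * X := by
    rw [← quad_form]
    refine (le_abs_self _).trans ((hΔ x x).trans_eq ?_)
    rw [Real.mul_self_sqrt hXpos.le]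
  -- the SBD term
  have e3 : ∀ (M : Matrix (Fin n × Fin r) (Fin n × Fin r) ℝ),
      ∑ q, ∑ q', SBD M q q' * (x q * x q') =
      ∑ i, ∑ a, ∑ c, M (i, a) (i, c) * (x (i, a) * x (i, c)) := by
    intro M
    simp only [Fintype.sum_prod_type]
    refine Finset.sum_congr rfl fun i _ => ?_
    have : ∀ a, ∑ j, ∑ c, SBD M (i, a) (j, c) * (x (i, a) * x (j, c)) =
        ∑ c, (M (i, a) (i, c) + M (i, c) (i, a)) / 2 * (x (i, a) * x (i, c)) := by
      intro a
      rw [Finset.sum_eq_single i]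
      · simp [SBD]
      · intro j _ hj
        simp [SBD, Ne.symm hj]
      · simp
    simp only [this, add_div, add_mul, Finset.sum_add_distrib]
    rw [Finset.sum_comm (f := fun a c => M (i, c) (i, a) / 2 * (x (i, a) * x (i, c)))]
    rw [← Finset.sum_add_distrib]
    refine Finset.sum_congr rfl fun a _ => ?_
    rw [← Finset.sum_add_distrib]
    refine Finset.sum_congr rfl fun c _ => ?_
    ring
  have e4 : ∀ q q', ((M1 - Δ) * Y * Yᵀ) q q' =
      ∑ q'', M1 q q'' * gr Y q'' q' - ∑ q'', Δ q q'' * gr Y q'' q' := by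
    intro q q'
    rw [Matrix.mul_assoc, mul_apply, ← Finset.sum_sub_distrib]
    refine Finset.sum_congr rfl fun q'' _ => ?_
    rw [Matrix.sub_apply, sub_mul]
    simp [mul_apply, gr]
  have q3 : ∑ i, ∑ a, ∑ c, (∑ q'', M1 (i, a) q'' * gr Y q'' (i, c)) * (x (i, a) * x (i, c)) ≤
      F * X := by
    have e5 : ∀ i, ∑ a, ∑ c, (∑ q'', M1 (i, a) q'' * gr Y q'' (i, c)) * (x (i, a) * x (i, c)) =
        ∑ j, G.lapMatrix ℝ i j * ∑ a, ∑ c, gr Y (j, a) (i, c) * (x (i, a) * x (i, c)) := by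
      intro i
      have : ∀ a c, ∑ q'', M1 (i, a) q'' * gr Y q'' (i, c) =
          ∑ j, G.lapMatrix ℝ i j * gr Y (j, a) (i, c) := by
        intro a c
        rw [Fintype.sum_prod_type]
        refine Finset.sum_congr rfl fun j _ => ?_
        simp [hM1, one_apply]
      simp only [this, Finset.sum_mul, Finset.mul_sum]
      conv_lhs => enter [2, a]; rw [Finset.sum_comm]
      rw [Finset.sum_comm]
      simp only [mul_assoc]
    have e6 : ∀ i j, ∑ a, ∑ c, gr Y (i, a) (i, c) * (x (i, a) * x (i, c)) -
        ∑ a, ∑ c, gr Y (j, a) (i, c) * (x (i, a) * x (i, c)) ≤ (r - tau Y i j) * ξ i := by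
      intro i j
      have f1 : ∀ j' j'' : Fin n, ∑ a, ∑ c, gr Y (j', a) (j'', c) * (x (i, a) * x (i, c)) =
          ∑ b, (∑ a, Y (j', a) b * x (i, a)) * (∑ a, Y (j'', a) b * x (i, a)) := by
        intro j' j''
        simp only [gr, Finset.sum_mul_sum]
        simp only [Finset.sum_mul]
        conv_lhs => enter [2, a]; rw [Finset.sum_comm]
        rw [Finset.sum_comm]
        exact Finset.sum_congr rfl fun _ _ => Finset.sum_congr rfl fun _ _ =>
          Finset.sum_congr rfl fun _ _ => by ring
      have f2 : ∑ a, ∑ c, gr Y (i, a) (i, c) * (x (i, a) * x (i, c)) =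
          ∑ a, ∑ c, gr Y (j, a) (j, c) * (x (i, a) * x (i, c)) := by
        simp only [hY.gr_eq]
      have f3 : 2 * (∑ a, ∑ c, gr Y (i, a) (i, c) * (x (i, a) * x (i, c)) -
        ∑ a, ∑ c, gr Y (j, a) (i, c) * (x (i, a) * x (i, c))) =
          ∑ b, (∑ a, (Y (i, a) b - Y (j, a) b) * x (i, a)) ^ 2 := by
        have g1 := f1 i i
        have g2 := f1 j j
        have g3 := f1 j i
        have g4 : ∑ b, (∑ a, (Y (i, a) b - Y (j, a) b) * x (i, a)) ^ 2 =
            ∑ b, (∑ a, Y (i, a) b * x (i, a)) * (∑ a, Y (i, a) b * x (i, a)) +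
            ∑ b, (∑ a, Y (j, a) b * x (i, a)) * (∑ a, Y (j, a) b * x (i, a)) -
            2 * ∑ b, (∑ a, Y (j, a) b * x (i, a)) * (∑ a, Y (i, a) b * x (i, a)) := by
          rw [Finset.mul_sum, ← Finset.sum_add_distrib, ← Finset.sum_sub_distrib]
          refine Finset.sum_congr rfl fun b _ => ?_
          simp only [sub_mul, Finset.sum_sub_distrib]
          ring
        linarith
      have f4 : ∑ b, (∑ a, (Y (i, a) b - Y (j, a) b) * x (i, a)) ^ 2 ≤
          2 * (r - tau Y i j) * ξ i := by
        rw [← dist_tau hY i j, Finset.sum_comm, Finset.sum_mul]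
        exact Finset.sum_le_sum fun b _ => Finset.sum_mul_sq_le_sq_mul_sq _ _ _
      linarith
    simp only [e5]
    rw [hFdef, Finset.sum_mul]
    refine Finset.sum_le_sum fun i _ => ?_
    refine (lap_sum G (fun i j => ∑ a, ∑ c, gr Y (j, a) (i, c) * (x (i, a) * x (i, c)))
      i).trans_le ?_
    rw [Finset.sum_mul]
    refine Finset.sum_le_sum fun j _ => ?_
    rw [mul_assoc]
    refine mul_le_mul_of_nonneg_left ((e6 i j).trans ?_) (adj_nonneg G i j)
    exact mul_le_mul_of_nonneg_left (hξX i) (sub_nonneg.2 (tau_le hY i j))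
  have q4 : -∑ i, ∑ a, ∑ c, (∑ q'', Δ (i, a) q'' * gr Y q'' (i, c)) * (x (i, a) * x (i, c)) ≤
      δ * s * X := by
    set P : Fin n × Fin r → Fin p → ℝ := fun q b => x q * ∑ c, x (q.1, c) * Y (q.1, c) b with hP
    have e5 : ∑ i, ∑ a, ∑ c, (∑ q'', Δ (i, a) q'' * gr Y q'' (i, c)) * (x (i, a) * x (i, c)) =
        BF Δ P Y := by
      change _ = ∑ q, ∑ q', Δ q q' * ∑ b, P q b * Y q' b
      rw [Fintype.sum_prod_type]
      refine Finset.sum_congr rfl fun i _ => Finset.sum_congr rfl fun a _ => ?_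
      simp only [Finset.sum_mul]
      rw [Finset.sum_comm]
      refine Finset.sum_congr rfl fun q _ => ?_
      simp only [hP, gr, Finset.mul_sum, Finset.sum_mul]
      rw [Finset.sum_comm]
      exact Finset.sum_congr rfl fun _ _ => Finset.sum_congr rfl fun _ _ => by ring
    have e6 : ∀ i, ∑ b, (∑ c, x (i, c) * Y (i, c) b) ^ 2 = ξ i := by
      intro i
      have : ∑ b, (∑ c, x (i, c) * Y (i, c) b) ^ 2 =
          ∑ a, ∑ c, gr Y (i, a) (i, c) * (x (i, a) * x (i, c)) := by
        simp only [gr, sq, Finset.sum_mul_sum]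
        simp only [Finset.sum_mul]
        symm
        conv_lhs => enter [2, a]; rw [Finset.sum_comm]
        rw [Finset.sum_comm]
        exact Finset.sum_congr rfl fun _ _ => Finset.sum_congr rfl fun _ _ =>
          Finset.sum_congr rfl fun _ _ => by ring
      rw [this]
      simp [hY.gr_eq, hξ, sq]
    have e7 : NS P ≤ X ^ 2 := by
      rw [NS_blocks]
      have : ∀ i, ∑ a, ∑ b, P (i, a) b ^ 2 = ξ i * ξ i := by
        intro i
        simp only [hP, mul_pow, ← Finset.mul_sum, e6, ← Finset.sum_mul]
        rfl
      simp only [this]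
      calc ∑ i, ξ i * ξ i ≤ ∑ i, X * ξ i := Finset.sum_le_sum fun i _ =>
            mul_le_mul_of_nonneg_right (hξX i) (hξ0 i)
        _ = X ^ 2 := by rw [← Finset.mul_sum, ← hXb, sq]
    rw [e5]
    refine (neg_le_abs _).trans ((BF_bound Δ δ hδ hΔ _ _).trans ?_)
    rw [NS_Y hY]
    have : √(NS P) ≤ X := by
      rw [← Real.sqrt_sq hXpos.le]; exact Real.sqrt_le_sqrt e7
    calc δ * (√(NS P) * √(↑r * ↑n)) ≤ δ * (X * s) := by gcongr
      _ = _ := by ring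
  have efin : x ⬝ᵥ (Smat (M1 - Δ) Y *ᵥ x) = ∑ q, ∑ q', M1 q q' * (x q * x q')
      - ∑ q, ∑ q', Δ q q' * (x q * x q')
      - (∑ i, ∑ a, ∑ c, (∑ q'', M1 (i, a) q'' * gr Y q'' (i, c)) * (x (i, a) * x (i, c))
        - ∑ i, ∑ a, ∑ c, (∑ q'', Δ (i, a) q'' * gr Y q'' (i, c)) * (x (i, a) * x (i, c))) := by
    have : ∑ i, ∑ a, ∑ c, (∑ q'', M1 (i, a) q'' * gr Y q'' (i, c)) * (x (i, a) * x (i, c))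
        - ∑ i, ∑ a, ∑ c, (∑ q'', Δ (i, a) q'' * gr Y q'' (i, c)) * (x (i, a) * x (i, c))
        = ∑ q, ∑ q', SBD ((M1 - Δ) * Y * Yᵀ) q q' * (x q * x q') := by
      rw [e3]
      simp only [e4, sub_mul, Finset.sum_sub_distrib]
    rw [this, quad_form]
    simp only [← Finset.sum_sub_distrib]
    refine Finset.sum_congr rfl fun q _ => Finset.sum_congr rfl fun q' _ => ?_
    simp only [Smat, Matrix.sub_apply]
    ring
  rw [efin]
  have : F * X ≤ 45 / 100 * l * X := mul_le_mul_of_nonneg_right hFl hXpos.le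
  have : 4 * (δ * s) * X ≤ l * X := mul_le_mul_of_nonneg_right hδs hXpos.le
  have : 4 * δ * X ≤ l * X := mul_le_mul_of_nonneg_right hδ4 hXpos.le
  have : 0 < l * X := mul_pos hlpos hXpos
  linarith


lemma Dmat_mul {n r : ℕ} (Zb : Fin n → Matrix (Fin r) (Fin r) ℝ) (hZb : ∀ i, Zb i * (Zb i)ᵀ = 1) :
    Dmat Zb * (Dmat Zb)ᵀ = 1 := by
  ext ⟨i, a⟩ ⟨j, c⟩
  simp only [mul_apply, Fintype.sum_prod_type, transpose_apply, Dmat, of_apply]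
  by_cases hij : i = j
  · subst hij
    have := congrFun (congrFun (hZb i) a) c
    simp only [mul_apply, transpose_apply] at this
    rw [Finset.sum_eq_single i]
    · simp only [if_true, this]
      simp [one_apply]
    · intro k _ hk
      simp [Ne.symm hk]
    · simp
  · rw [one_apply_ne (by simp [hij])]
    refine Finset.sum_eq_zero fun k _ => Finset.sum_eq_zero fun e _ => ?_
    by_cases h : i = k
    · subst h; simp [Ne.symm hij]
    · simp [h]

lemma Dmat_tr_mul_apply {n r : ℕ} {κ : Type*} (Zb : Fin n → Matrix (Fin r) (Fin r) ℝ)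
    (Q : Matrix (Fin n × Fin r) κ ℝ) (i : Fin n) (a : Fin r) (k : κ) :
    ((Dmat Zb)ᵀ * Q) (i, a) k = ∑ e, Zb i e a * Q (i, e) k := by
  simp only [mul_apply, Fintype.sum_prod_type, transpose_apply, Dmat, of_apply]
  rw [Finset.sum_eq_single i]
  · simp
  · intro j _ hj; simp [hj]
  · simp

lemma mul_Dmat_apply {n r : ℕ} {κ : Type*} (Zb : Fin n → Matrix (Fin r) (Fin r) ℝ)
    (Q : Matrix κ (Fin n × Fin r) ℝ) (i : Fin n) (a : Fin r) (k : κ) :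
    (Q * Dmat Zb) k (i, a) = ∑ e, Q k (i, e) * Zb i e a := by
  simp only [mul_apply, Fintype.sum_prod_type, Dmat, of_apply]
  rw [Finset.sum_eq_single i]
  · simp
  · intro j _ hj; simp [hj]
  · simp

lemma SBD_conj {n r : ℕ} (Zb : Fin n → Matrix (Fin r) (Fin r) ℝ)
    (M : Matrix (Fin n × Fin r) (Fin n × Fin r) ℝ) :
    SBD ((Dmat Zb)ᵀ * M * Dmat Zb) = (Dmat Zb)ᵀ * SBD M * Dmat Zb := by
  ext ⟨i, a⟩ ⟨j, c⟩
  rw [mul_Dmat_apply]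
  simp only [Dmat_tr_mul_apply]
  simp only [SBD, of_apply, mul_Dmat_apply, Dmat_tr_mul_apply]
  by_cases hij : i = j
  · subst hij
    simp only [if_true, Finset.sum_mul]
    rw [Finset.sum_comm (f := fun e f => Zb i f c * M (i, f) (i, e) * Zb i e a)]
    rw [← Finset.sum_add_distrib, Finset.sum_div]
    refine Finset.sum_congr rfl fun e _ => ?_
    rw [← Finset.sum_add_distrib, Finset.sum_div]
    refine Finset.sum_congr rfl fun f _ => ?_
    ring
  · simp [hij]

lemma blk_Dmat {n r p : ℕ} (Zb : Fin n → Matrix (Fin r) (Fin r) ℝ)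
    (Q : Matrix (Fin n × Fin r) (Fin p) ℝ) (i : Fin n) :
    blk ((Dmat Zb)ᵀ * Q) i = (Zb i)ᵀ * blk Q i := by
  ext a b
  simp only [blk, of_apply, Dmat_tr_mul_apply]
  simp [mul_apply]

lemma posdef_on {n r p : ℕ} (hn : 1 ≤ n) (hr : 1 ≤ r) (hp : r + 2 < p)
    (G : SimpleGraph (Fin n)) [DecidableRel G.Adj]
    (Zb : Fin n → Matrix (Fin r) (Fin r) ℝ) (hZb : ∀ i, Zb i * (Zb i)ᵀ = 1)
    (Δ : Matrix (Fin n × Fin r) (Fin n × Fin r) ℝ)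
    (Lhat : Matrix (Fin n × Fin r) (Fin n × Fin r) ℝ)
    (hLhat : Lhat = LZmat (G.lapMatrix ℝ) Zb - Δ)
    (Cp : ℝ) (hCp : Cp = 2 * ((p : ℝ) + r - 2) / ((p : ℝ) - r - 2))
    (hΔsmall : opNorm Δ < lam2 (G.lapMatrix ℝ) / (Real.sqrt 5 * Cp * Real.sqrt (r * n)))
    (Y : Matrix (Fin n × Fin r) (Fin p) ℝ)
    (hY : IsSecondOrderCritical Lhat Y) (x : Fin n × Fin r → ℝ)
    (hx : (Zstack Zb)ᵀ *ᵥ x = 0) (hx0 : x ≠ 0) : 0 < x ⬝ᵥ (Smat Lhat Y *ᵥ x) := by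
  obtain ⟨hfeas, -, hsec⟩ := hY
  set D := Dmat Zb with hD
  have hDD : D * Dᵀ = 1 := Dmat_mul Zb hZb
  have hDD' : Dᵀ * D = 1 := mul_eq_one_comm.1 hDD
  have hZ' : ∀ i, (Zb i)ᵀ * Zb i = 1 := fun i => mul_eq_one_comm.1 (hZb i)
  set M1 := (G.lapMatrix ℝ ⊗ₖ (1 : Matrix (Fin r) (Fin r) ℝ)) with hM1
  have hL : M1 - Dᵀ * Δ * D = Dᵀ * Lhat * D := by
    rw [hLhat, LZmat, Matrix.mul_sub, Matrix.sub_mul, ← hD, ← hM1]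
    congr 1
    calc M1 = (Dᵀ * D) * M1 * (Dᵀ * D) := by rw [hDD']; simp
      _ = _ := by simp only [Matrix.mul_assoc]
  have hS : Smat (M1 - Dᵀ * Δ * D) (Dᵀ * Y) = Dᵀ * Smat Lhat Y * D := by
    rw [hL, Smat, Smat, Matrix.mul_sub, Matrix.sub_mul, ← SBD_conj, ← hD]
    congr 2
    rw [transpose_mul, transpose_transpose]
    calc Dᵀ * Lhat * D * (Dᵀ * Y) * (Yᵀ * D) = Dᵀ * Lhat * (D * Dᵀ) * Y * Yᵀ * D := by
          simp only [Matrix.mul_assoc]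
      _ = _ := by rw [hDD]; simp only [Matrix.mul_assoc, Matrix.mul_one, Matrix.one_mul]
  have hfeas' : Feasible (Dᵀ * Y) := by
    intro i
    rw [blk_Dmat, transpose_mul, transpose_transpose, Matrix.mul_assoc, ← Matrix.mul_assoc (blk Y i),
      hfeas i, Matrix.one_mul, hZ']
  have hnorm : ∀ u : Fin n × Fin r → ℝ, ∑ q, (D *ᵥ u) q ^ 2 = ∑ q, u q ^ 2 := by
    intro u
    have h1 : ∀ w : Fin n × Fin r → ℝ, ∑ q, w q ^ 2 = w ⬝ᵥ w := by
      intro w; simp [dotProduct, sq]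
    rw [h1, h1, dotProduct_mulVec, ← mulVec_transpose, mulVec_mulVec, hDD', one_mulVec]
  have hdot : ∀ (T : Matrix (Fin n × Fin r) (Fin n × Fin r) ℝ) (u v : Fin n × Fin r → ℝ),
      u ⬝ᵥ ((Dᵀ * T * D) *ᵥ v) = (D *ᵥ u) ⬝ᵥ (T *ᵥ (D *ᵥ v)) := by
    intro T u v
    rw [← mulVec_mulVec, ← mulVec_mulVec, dotProduct_mulVec, vecMul_transpose]
  have hc := core hn hr hp G hfeas' (Dᵀ * Δ * D) (opNorm Δ) (norm_nonneg _)
    (fun u v => by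
      rw [hdot, ← hnorm u, ← hnorm v]
      exact opNorm_bound Δ _ _) Cp hCp hΔsmall
    (fun Yd hYd => by
      rw [← hM1, hS]
      have h1 := hsec (D * Yd) (fun i => by
        have e : blk (D * Yd) i = Zb i * blk Yd i := by
          have := blk_Dmat Zb (D * Yd) i
          rw [← hD, ← Matrix.mul_assoc, hDD', Matrix.one_mul] at this
          rw [this, ← Matrix.mul_assoc, hZb, Matrix.one_mul]
        have h2 := hYd i
        rw [hD, blk_Dmat] at h2
        rw [e]
        have h3 : Zb i * (blk Yd i * ((Zb i)ᵀ * blk Y i)ᵀ + (Zb i)ᵀ * blk Y i * (blk Yd i)ᵀ) * (Zb i)ᵀ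
            = 0 := by rw [h2]; simp
        rw [← h3, Matrix.mul_add, Matrix.add_mul]
        simp only [transpose_mul, transpose_transpose]
        congr 1
        · calc Zb i * blk Yd i * (blk Y i)ᵀ = Zb i * blk Yd i * (blk Y i)ᵀ * (Zb i * (Zb i)ᵀ) := by
                rw [hZb, Matrix.mul_one]
            _ = _ := by simp only [Matrix.mul_assoc]
        · calc blk Y i * ((blk Yd i)ᵀ * (Zb i)ᵀ) = (Zb i * (Zb i)ᵀ) * (blk Y i * ((blk Yd i)ᵀ * (Zb i)ᵀ)) := by
                rw [hZb, Matrix.one_mul]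
            _ = _ := by simp only [Matrix.mul_assoc])
      refine h1.trans_eq ?_
      rw [transpose_mul]
      calc (Smat Lhat Y * (D * Yd) * (Ydᵀ * Dᵀ)).trace
          = ((Smat Lhat Y * (D * Yd) * Ydᵀ) * Dᵀ).trace := by simp only [Matrix.mul_assoc]
        _ = (Dᵀ * (Smat Lhat Y * (D * Yd) * Ydᵀ)).trace := trace_mul_comm _ _
        _ = _ := by simp only [Matrix.mul_assoc])
    (Dᵀ *ᵥ x)
    (fun a => by
      have := congrFun hx a
      simp only [mulVec, dotProduct, Fintype.sum_prod_type, transpose_apply, Zstack, of_apply,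
        Pi.zero_apply] at this
      rw [← this]
      refine Finset.sum_congr rfl fun i _ => ?_
      have h2 := Dmat_tr_mul_apply Zb (Matrix.of fun q (_ : Unit) => x q) i a ()
      simpa [mul_apply, mulVec, dotProduct] using h2)
    (fun h => hx0 (by
      have : D *ᵥ (Dᵀ *ᵥ x) = 0 := by rw [h]; simp
      rwa [mulVec_mulVec, hDD, one_mulVec] at this))
  rw [← hM1, hS, hdot, mulVec_mulVec, hDD, one_mulVec] at hc
  exact hc


open scoped MatrixOrder in
lemma psd_factor {m : Type*} [Fintype m] [DecidableEq m] {X : Matrix m m ℝ} (hX : X.PosSemidef) :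
    ∃ B : Matrix m m ℝ, X = Bᵀ * B := by
  obtain ⟨B, hB⟩ := CStarAlgebra.nonneg_iff_eq_star_mul_self.mp hX.nonneg
  exact ⟨B, by simpa [star_eq_conjTranspose] using hB⟩

lemma SBD_symm {n r : ℕ} (M : Matrix (Fin n × Fin r) (Fin n × Fin r) ℝ) : (SBD M)ᵀ = SBD M := by
  ext q q'
  simp only [transpose_apply, SBD, of_apply, eq_comm (a := q'.1), add_comm (M q' q)]

/-- selection of a block -/
def selB {n r : ℕ} (i : Fin n) : Matrix (Fin r) (Fin n × Fin r) ℝ :=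
  Matrix.of fun a q => if q = (i, a) then 1 else 0

lemma selB_mul {n r p : ℕ} (i : Fin n) (Y : Matrix (Fin n × Fin r) (Fin p) ℝ) :
    selB (r := r) i * Y = blk Y i := by
  ext a b
  simp [selB, blk, mul_apply]

lemma blk_mul {n r p k : ℕ} (i : Fin n) (Y : Matrix (Fin n × Fin r) (Fin p) ℝ)
    (Q : Matrix (Fin p) (Fin k) ℝ) : blk (Y * Q) i = blk Y i * Q := by
  ext a b
  simp [blk, mul_apply]

lemma structure_lemma {n r p : ℕ} (i0 : Fin n) {Y : Matrix (Fin n × Fin r) (Fin p) ℝ}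
    (hY : Feasible Y) (S : Matrix (Fin n × Fin r) (Fin n × Fin r) ℝ) (hSs : Sᵀ = S)
    (hSY : S * Y = 0) (C : Matrix (Fin r) (Fin n × Fin r) ℝ)
    (hpos : ∀ x, C *ᵥ x = 0 → x ≠ 0 → 0 < x ⬝ᵥ (S *ᵥ x)) :
    Y.rank = r ∧ Y * (blk Y i0)ᵀ * blk Y i0 = Y ∧ (∀ x, 0 ≤ x ⬝ᵥ (S *ᵥ x)) ∧
      (∀ x, x ⬝ᵥ (S *ᵥ x) = 0 → ∃ y, x = Y *ᵥ y) := by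
  set U := blk Y i0 with hU
  have hUU : U * Uᵀ = 1 := hY i0
  have hUr : r ≤ U.rank := by
    have := rank_mul_le_left U Uᵀ
    rw [hUU, rank_one, Fintype.card_fin] at this
    exact this
  have hUY : U.rank ≤ Y.rank := by
    rw [hU, ← selB_mul]; exact rank_mul_le_right _ _
  have hUr' : U.rank ≤ r := by
    have := rank_le_card_height U
    rwa [Fintype.card_fin] at this
  have hSY0 : ∀ y, S *ᵥ (Y *ᵥ y) = 0 := by
    intro y; rw [mulVec_mulVec, hSY, zero_mulVec]
  have hker : ∀ y, (C * Y) *ᵥ y = 0 → Y *ᵥ y = 0 := by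
    intro y hy
    by_contra hne
    have := hpos (Y *ᵥ y) (by rw [mulVec_mulVec]; exact hy) hne
    rw [hSY0] at this
    simp at this
  have kerCY : LinearMap.ker (C * Y).mulVecLin = LinearMap.ker Y.mulVecLin := by
    ext y
    simp only [LinearMap.mem_ker, mulVecLin_apply]
    exact ⟨hker y, fun h => by rw [← mulVec_mulVec, h, mulVec_zero]⟩
  have n1 := LinearMap.finrank_range_add_finrank_ker (C * Y).mulVecLin
  have n2 := LinearMap.finrank_range_add_finrank_ker Y.mulVecLin
  have n3 := LinearMap.finrank_range_add_finrank_ker U.mulVecLin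
  rw [kerCY] at n1
  have r1 : (C * Y).rank = Y.rank := by
    simp only [rank]; omega
  have r2 : (C * Y).rank ≤ r := by
    have := rank_le_card_height (C * Y)
    rwa [Fintype.card_fin] at this
  have hYr : Y.rank = r := by omega
  have kerUY : LinearMap.ker Y.mulVecLin = LinearMap.ker U.mulVecLin := by
    apply Submodule.eq_of_le_of_finrank_eq
    · intro y hy
      simp only [LinearMap.mem_ker, mulVecLin_apply] at hy ⊢
      rw [hU, ← selB_mul, ← mulVec_mulVec, hy, mulVec_zero]
    · simp only [rank] at hYr hUr hUr'
      omega
  have hsurj : ∀ z : Fin r → ℝ, ∃ y, (C * Y) *ᵥ y = z := by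
    have : LinearMap.range (C * Y).mulVecLin = ⊤ := by
      apply Submodule.eq_top_of_finrank_eq
      have : (C * Y).rank = r := by omega
      simp only [rank] at this
      rw [this]; simp
    intro z
    have hz : z ∈ LinearMap.range (C * Y).mulVecLin := by rw [this]; trivial
    obtain ⟨y, hy⟩ := hz
    exact ⟨y, hy⟩
  have hdecomp : ∀ x, ∃ y, C *ᵥ (x - Y *ᵥ y) = 0 ∧
      x ⬝ᵥ (S *ᵥ x) = (x - Y *ᵥ y) ⬝ᵥ (S *ᵥ (x - Y *ᵥ y)) := by
    intro x
    obtain ⟨y, hy⟩ := hsurj (C *ᵥ x)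
    refine ⟨y, ?_, ?_⟩
    · rw [mulVec_sub, mulVec_mulVec, hy, sub_self]
    · rw [mulVec_sub, hSY0, sub_zero, sub_dotProduct, dotProduct_mulVec (Y *ᵥ y), ← mulVec_transpose,
        hSs, hSY0, zero_dotProduct, sub_zero]
  refine ⟨hYr, ?_, ?_, ?_⟩
  · have : ∀ y, Y *ᵥ ((Uᵀ * U) *ᵥ y) = Y *ᵥ y := by
      intro y
      have h1 : y - (Uᵀ * U) *ᵥ y ∈ LinearMap.ker U.mulVecLin := by
        simp only [LinearMap.mem_ker, mulVecLin_apply]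
        rw [mulVec_sub, mulVec_mulVec, ← Matrix.mul_assoc, hUU, Matrix.one_mul, sub_self]
      rw [← kerUY] at h1
      simp only [LinearMap.mem_ker, mulVecLin_apply] at h1
      rw [mulVec_sub, sub_eq_zero] at h1
      exact h1.symm
    rw [Matrix.mul_assoc]
    apply Matrix.ext_of_mulVec_single
    intro b
    rw [← mulVec_mulVec]; exact this _
  · intro x
    obtain ⟨y, h1, h2⟩ := hdecomp x
    rw [h2]
    by_cases h : x - Y *ᵥ y = 0
    · rw [h]; simp
    · exact (hpos _ h1 h).le
  · intro x hx
    obtain ⟨y, h1, h2⟩ := hdecomp x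
    refine ⟨y, ?_⟩
    by_contra h
    have := hpos _ h1 (sub_ne_zero.2 h)
    linarith

lemma SDP_diag {n r : ℕ} {X : Matrix (Fin n × Fin r) (Fin n × Fin r) ℝ} (hX : SDPFeasible X)
    (q q' : Fin n × Fin r) (h : q.1 = q'.1) : X q q' = if q = q' then 1 else 0 := by
  have h1 := congrFun (congrFun hX.2 q) q'
  have h2 : X q' q = X q q' := by
    have := congrFun (congrFun hX.1.1 q) q'
    simpa using this
  simp only [SBD, of_apply, h, if_true, h2, one_apply] at h1
  rw [← h1]; ring

lemma ip_split {n r p : ℕ} (Lhat : Matrix (Fin n × Fin r) (Fin n × Fin r) ℝ)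
    (Y : Matrix (Fin n × Fin r) (Fin p) ℝ)
    {X : Matrix (Fin n × Fin r) (Fin n × Fin r) ℝ} (hX : SDPFeasible X) :
    ip Lhat X = ip (Smat Lhat Y) X + (Lhat * Y * Yᵀ).trace := by
  have h : ip (SBD (Lhat * Y * Yᵀ)) X = (Lhat * Y * Yᵀ).trace := by
    simp only [ip, trace, diag, mul_apply (M := SBD _), transpose_apply (M := X)]
    refine Finset.sum_congr rfl fun q _ => ?_
    have : ∀ q', SBD (Lhat * Y * Yᵀ) q q' * X q q' =
        if q = q' then (Lhat * Y * Yᵀ) q q else 0 := by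
      intro q'
      by_cases h : q.1 = q'.1
      · rw [SDP_diag hX q q' h]
        by_cases hq : q = q'
        · subst hq; simp [SBD]
        · simp [hq]
      · have : q ≠ q' := fun h' => h (by rw [h'])
        simp [SBD, h, this]
    simp only [this]
    simp
  rw [← h]
  simp only [ip, Smat, ← trace_add, ← Matrix.add_mul, sub_add_cancel]

lemma SDPFeasible_gram {n r k : ℕ} {W : Matrix (Fin n × Fin r) (Fin k) ℝ} (hW : Feasible W) :
    SDPFeasible (W * Wᵀ) := by
  constructor
  · have := posSemidef_self_mul_conjTranspose W
    simpa using this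
  · ext ⟨i, a⟩ ⟨j, c⟩
    have e : ∀ q q', (W * Wᵀ) q q' = gr W q q' := fun q q' => by simp [mul_apply, gr]
    simp only [SBD, of_apply, e]
    by_cases hij : i = j
    · subst hij
      simp only [if_true, hW.gr_eq, one_apply, Prod.mk.injEq, true_and, eq_comm (a := c)]
      ring
    · simp [hij, one_apply]

/-- Consequences of positive semidefiniteness of the dual certificate. -/
lemma conclude {n r p : ℕ} (i0 : Fin n) (Lhat : Matrix (Fin n × Fin r) (Fin n × Fin r) ℝ)
    {Y : Matrix (Fin n × Fin r) (Fin p) ℝ}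
    (hY : Feasible Y) (hSY : Smat Lhat Y * Y = 0)
    (hUY : Y * (blk Y i0)ᵀ * blk Y i0 = Y) (hpsd : ∀ x, 0 ≤ x ⬝ᵥ (Smat Lhat Y *ᵥ x))
    (hzero : ∀ x, x ⬝ᵥ (Smat Lhat Y *ᵥ x) = 0 → ∃ y, x = Y *ᵥ y) :
    (∀ X, SDPFeasible X → ip Lhat (Y * Yᵀ) ≤ ip Lhat X) ∧
    (∀ X, SDPFeasible X → ip Lhat X ≤ ip Lhat (Y * Yᵀ) → X = Y * Yᵀ) := by
  set S := Smat Lhat Y with hS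
  have hip0 : ip S (Y * Yᵀ) = 0 := by
    rw [ip, transpose_mul, transpose_transpose, ← Matrix.mul_assoc, hSY]; simp
  have hY' := ip_split Lhat Y (SDPFeasible_gram hY)
  rw [← hS, hip0] at hY'
  have hfac : ∀ X, SDPFeasible X → ∃ B : Matrix (Fin n × Fin r) (Fin n × Fin r) ℝ, X = Bᵀ * B ∧
      ip S X = ∑ q, (B q) ⬝ᵥ (S *ᵥ (B q)) := by
    intro X hX
    obtain ⟨B, hB'⟩ := psd_factor hX.1
    refine ⟨B, hB', ?_⟩
    rw [ip, hB', transpose_mul, transpose_transpose, ← Matrix.mul_assoc, trace_mul_comm,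
      ← Matrix.mul_assoc]
    simp only [trace, diag]
    refine Finset.sum_congr rfl fun q _ => ?_
    rw [Matrix.mul_assoc]
    simp [mul_apply, dotProduct, mulVec]
  refine ⟨?_, ?_⟩
  · intro X hX
    obtain ⟨B, -, hB⟩ := hfac X hX
    rw [hY', ip_split Lhat Y hX, ← hS, hB]
    have : 0 ≤ ∑ q, (B q) ⬝ᵥ (S *ᵥ (B q)) := Finset.sum_nonneg fun q _ => hpsd _
    linarith
  · intro X hX hle
    obtain ⟨B, hXB, hB⟩ := hfac X hX
    rw [hY', ip_split Lhat Y hX, ← hS, hB] at hle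
    have h0 : 0 ≤ ∑ q, (B q) ⬝ᵥ (S *ᵥ (B q)) := Finset.sum_nonneg fun q _ => hpsd _
    have h1 : ∑ q, (B q) ⬝ᵥ (S *ᵥ (B q)) = 0 := by linarith
    have h2 := (Finset.sum_eq_zero_iff_of_nonneg (fun q _ => hpsd (B q))).1 h1
    choose c hc using fun q => hzero (B q) (h2 q (Finset.mem_univ q))
    have hBT : Bᵀ = Y * (Matrix.of c)ᵀ := by
      ext q q'
      have := congrFun (hc q') q
      simpa [mul_apply, mulVec, dotProduct] using this
    set Cm : Matrix (Fin n × Fin r) (Fin p) ℝ := Matrix.of c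
    set U := blk Y i0 with hU
    have hXK : X = Y * (Cmᵀ * Cm) * Yᵀ := by
      rw [hXB, hBT, show B = (Bᵀ)ᵀ by simp, hBT]
      simp only [transpose_mul, transpose_transpose, Matrix.mul_assoc]
    have hK : U * (Cmᵀ * Cm) * Uᵀ = 1 := by
      have h3 : selB (r := r) i0 * X * (selB (r := r) i0)ᵀ = 1 := by
        ext a b
        have := SDP_diag hX (i0, a) (i0, b) rfl
        simp only [selB, mul_apply, transpose_apply, of_apply]
        simp [this, one_apply]
      rw [hXK] at h3
      rw [← h3, hU, ← selB_mul]
      simp only [transpose_mul, Matrix.mul_assoc]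
    calc X = Y * (Cmᵀ * Cm) * Yᵀ := hXK
      _ = (Y * Uᵀ * U) * (Cmᵀ * Cm) * (Y * Uᵀ * U)ᵀ := by rw [hUY]
      _ = Y * Uᵀ * (U * (Cmᵀ * Cm) * Uᵀ) * (Y * Uᵀ)ᵀ := by
          simp only [transpose_mul, transpose_transpose, Matrix.mul_assoc]
      _ = (Y * Uᵀ * U) * Yᵀ := by
          rw [hK]; simp only [transpose_mul, transpose_transpose, Matrix.mul_assoc, Matrix.one_mul]
      _ = Y * Yᵀ := by rw [hUY]


/-- **Theorem 1.3 (benign landscape under small noise).**  Suppose `G` is connected,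
`p > r + 2`, `C_p = 2(p + r − 2)/(p − r − 2)`, and `‖Δ‖ < λ₂/(√5 C_p √(rn))`.  Then every
second-order critical point `Y` of the rank-`p` problem has rank exactly `r`, factors as
`Y = Ẑ U` with `Ẑ` having orthogonal `r × r` blocks and `U Uᵀ = I_r`; `Y Yᵀ` is the unique
optimal solution of the SDP relaxation (in particular all second-order critical points agree up
to `Y Yᵀ`); and `Ẑ` is the minimizer of the unrelaxed problem, uniquely up to
right-multiplication by an element of `O(r)`. -/
theorem noisy_benign_landscape
    (n r p : ℕ) (hn : 1 ≤ n) (hr : 1 ≤ r) (hrp : r ≤ p) (hp : r + 2 < p)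
    (G : SimpleGraph (Fin n)) [DecidableRel G.Adj] (hG : G.Connected)
    (Zb : Fin n → Matrix (Fin r) (Fin r) ℝ) (hZb : ∀ i, Zb i * (Zb i)ᵀ = 1)
    (Δ : Matrix (Fin n × Fin r) (Fin n × Fin r) ℝ) (hΔsym : Δᵀ = Δ)
    (hΔsupp : ∀ q q' : Fin n × Fin r, ¬ G.Adj q.1 q'.1 → Δ q q' = 0)
    (Lhat : Matrix (Fin n × Fin r) (Fin n × Fin r) ℝ)
    (hLhat : Lhat = LZmat (G.lapMatrix ℝ) Zb - Δ)
    (Cp : ℝ) (hCp : Cp = 2 * ((p : ℝ) + r - 2) / ((p : ℝ) - r - 2))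
    (hΔsmall : opNorm Δ < lam2 (G.lapMatrix ℝ) / (Real.sqrt 5 * Cp * Real.sqrt (r * n)))
    (Y : Matrix (Fin n × Fin r) (Fin p) ℝ)
    (hY : IsSecondOrderCritical Lhat Y) :
    -- (i) rank-`r` factorization
    Y.rank = r ∧
    (∃ (Zhat : Matrix (Fin n × Fin r) (Fin r) ℝ) (U : Matrix (Fin r) (Fin p) ℝ),
      Feasible Zhat ∧ U * Uᵀ = 1 ∧ Y = Zhat * U ∧
      -- (iii) `Ẑ` minimizes the unrelaxed problem, uniquely up to right `O(r)`-multiplication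
      (∀ W : Matrix (Fin n × Fin r) (Fin r) ℝ, Feasible W →
        ip Lhat (Zhat * Zhatᵀ) ≤ ip Lhat (W * Wᵀ)) ∧
      (∀ W : Matrix (Fin n × Fin r) (Fin r) ℝ, Feasible W →
        (∀ W' : Matrix (Fin n × Fin r) (Fin r) ℝ, Feasible W' →
          ip Lhat (W * Wᵀ) ≤ ip Lhat (W' * W'ᵀ)) →
        ∃ Q : Matrix (Fin r) (Fin r) ℝ, Q * Qᵀ = 1 ∧ W = Zhat * Q)) ∧
    -- (ii) `Y Yᵀ` is the unique optimal solution of the SDP relaxation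
    (∀ X : Matrix (Fin n × Fin r) (Fin n × Fin r) ℝ, SDPFeasible X →
      ip Lhat (Y * Yᵀ) ≤ ip Lhat X) ∧
    (∀ X : Matrix (Fin n × Fin r) (Fin n × Fin r) ℝ, SDPFeasible X →
      (∀ X' : Matrix (Fin n × Fin r) (Fin n × Fin r) ℝ, SDPFeasible X' →
        ip Lhat X ≤ ip Lhat X') →
      X = Y * Yᵀ) ∧
    -- in particular any two second-order critical points have the same `Y Yᵀ`
    (∀ Y' : Matrix (Fin n × Fin r) (Fin p) ℝ, IsSecondOrderCritical Lhat Y' →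
      Y' * Y'ᵀ = Y * Yᵀ) := by
  have i0 : Fin n := ⟨0, hn⟩
  have hLs : Lhatᵀ = Lhat := by
    rw [hLhat, transpose_sub, hΔsym, LZmat]
    congr 1
    have : (G.lapMatrix ℝ ⊗ₖ (1 : Matrix (Fin r) (Fin r) ℝ))ᵀ =
        G.lapMatrix ℝ ⊗ₖ (1 : Matrix (Fin r) (Fin r) ℝ) := by
      ext ⟨i, a⟩ ⟨j, c⟩
      have h := congrFun (congrFun (G.isSymm_lapMatrix (R := ℝ)) i) j
      rw [transpose_apply] at h
      simp [kroneckerMap_apply, h, one_apply, eq_comm]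
    simp only [transpose_mul, transpose_transpose, this, Matrix.mul_assoc]
  have hall : ∀ Y : Matrix (Fin n × Fin r) (Fin p) ℝ, IsSecondOrderCritical Lhat Y →
      Y.rank = r ∧ Y * (blk Y i0)ᵀ * blk Y i0 = Y ∧ (∀ x, 0 ≤ x ⬝ᵥ (Smat Lhat Y *ᵥ x)) ∧
      (∀ x, x ⬝ᵥ (Smat Lhat Y *ᵥ x) = 0 → ∃ y, x = Y *ᵥ y) := by
    intro Y hY
    refine structure_lemma i0 hY.1 _ ?_ hY.2.1 (Zstack Zb)ᵀ fun x hx hx0 =>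
      posdef_on hn hr hp G Zb hZb Δ Lhat hLhat Cp hCp hΔsmall Y hY x hx hx0
    rw [Smat, transpose_sub, SBD_symm, hLs]
  obtain ⟨hrank, hUY, hpsd, hzero⟩ := hall Y hY
  obtain ⟨hopt, huniq⟩ := conclude i0 Lhat hY.1 hY.2.1 hUY hpsd hzero
  have hUU : blk Y i0 * (blk Y i0)ᵀ = 1 := hY.1 i0
  have hZZ : (Y * (blk Y i0)ᵀ) * (Y * (blk Y i0)ᵀ)ᵀ = Y * Yᵀ := by
    rw [transpose_mul, transpose_transpose, ← Matrix.mul_assoc, hUY]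
  have hZf : Feasible (Y * (blk Y i0)ᵀ) := by
    intro i
    have h1 : blk Y i * (blk Y i0)ᵀ * blk Y i0 = blk Y i := by
      rw [← blk_mul, ← blk_mul, hUY]
    rw [blk_mul, transpose_mul, transpose_transpose, ← Matrix.mul_assoc, h1]
    exact hY.1 i
  refine ⟨hrank, ⟨Y * (blk Y i0)ᵀ, blk Y i0, hZf, hUU, hUY.symm, ?_, ?_⟩, hopt, ?_, ?_⟩
  · intro W hW
    rw [hZZ]
    exact hopt _ (SDPFeasible_gram hW)
  · intro W hW hWopt
    have h1 : W * Wᵀ = Y * Yᵀ := by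
      refine huniq _ (SDPFeasible_gram hW) ?_
      rw [← hZZ]; exact hWopt _ hZf
    have hWW : (blk W i0)ᵀ * blk W i0 = 1 := mul_eq_one_comm.1 (hW i0)
    refine ⟨blk W i0, hW i0, ?_⟩
    have h2 : W * (blk W i0)ᵀ = Y * (blk Y i0)ᵀ := by
      rw [← selB_mul, ← selB_mul, transpose_mul, transpose_mul, ← Matrix.mul_assoc,
        ← Matrix.mul_assoc, h1]
    rw [← h2, Matrix.mul_assoc, hWW, Matrix.mul_one]
  · intro X hX hXopt
    exact huniq X hX (hXopt _ (SDPFeasible_gram hY.1))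
  · intro Y' hY'
    obtain ⟨-, hUY', hpsd', hzero'⟩ := hall Y' hY'
    obtain ⟨hopt', -⟩ := conclude i0 Lhat hY'.1 hY'.2.1 hUY' hpsd' hzero'
    exact huniq _ (SDPFeasible_gram hY'.1) (hopt' _ (SDPFeasible_gram hY.1))

end SyncPaper
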